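/- Every admissible function α ∈ R^l can be written uniquely as a linear combination of products of indecomposable admissible functions. Precisely: the linear map, given by multiplication of functions, from the direct sum—over all unordered partitions of {1,…,l} into nonempty blocks—of the tensor products, over the blocks B of the partition, of the spaces R₀^{|B|} of indecomposable admissible functions in the variables {z_i : i ∈ B}, into R^l, is a linear isomorphism onto R^l. -/

import Mathlib

open scoped Classical

noncomputable section

namespace Griess

open MvPolynomial

variable {k : Type} [Field k]

/-- The field `k(z₁,…,z_l)` of rational functions over `k` in `l` variables. -/
abbrev RF (k : Type) [Field k] (l : ℕ) : Type := FractionRing (MvPolynomial (Fin l) k)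

/-- The variable `zᵢ` as an element of the rational function field. -/
def zv {k : Type} [Field k] {l : ℕ} (i : Fin l) : RF k l :=
  algebraMap (MvPolynomial (Fin l) k) (RF k l) (MvPolynomial.X i)

/-- The space `Φ^l` of rational functions of the form
`p(z₁,…,z_l) · ∏_{i<j} (zᵢ - z_j)^{k_{ij}}`. -/
def Phi (k : Type) [Field k] (l : ℕ) : Set (RF k l) :=
  { x | ∃ (p : MvPolynomial (Fin l) k) (e : Fin l → Fin l → ℤ),
      x = algebraMap (MvPolynomial (Fin l) k) (RF k l) p *
        ∏ i : Fin l, ∏ j : Fin l, (if i < j then (zv i - zv j) ^ e i j else 1) }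

/-- `D` is the family of partial derivative operators `∂_{z₁},…,∂_{z_l}`:
a family of `k`-linear derivations with `D i (z j) = δ_{ij}`. -/
def IsPartialDeriv {l : ℕ} (D : Fin l → Derivation k (RF k l) (RF k l)) : Prop :=
  ∀ i j : Fin l, D i (zv j) = if j = i then 1 else 0

/-- The operator `Δ = Σᵢ ∂_{zᵢ}`. -/
def Delta {l : ℕ} (D : Fin l → Derivation k (RF k l) (RF k l)) (α : RF k l) : RF k l :=
  ∑ i, D i α

/-- The operator `Δ*(n₁,…,n_l) = Σᵢ (zᵢ² ∂_{zᵢ} + nᵢ zᵢ)`. -/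
def DeltaStar {l : ℕ} (D : Fin l → Derivation k (RF k l) (RF k l)) (n : Fin l → ℤ)
    (α : RF k l) : RF k l :=
  ∑ i, ((zv i) ^ 2 * D i α + (n i : RF k l) * zv i * α)

section Subst

variable {l : ℕ}

/-- The embedding of polynomials in `z₁,…,z_l` into rational functions of
`z₁,…,z_l` and one extra variable `t` (`= RatFunc.X`). -/
def toRatFuncHom (k : Type) [Field k] (l : ℕ) :
    Polynomial (MvPolynomial (Fin l) k) →+* RatFunc (RF k l) :=
  (algebraMap (Polynomial (RF k l)) (RatFunc (RF k l))).comp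
    (Polynomial.mapRingHom (algebraMap (MvPolynomial (Fin l) k) (RF k l)))

lemma toRatFuncHom_injective : Function.Injective (toRatFuncHom k l) := by
  have h1 : Function.Injective (algebraMap (Polynomial (RF k l)) (RatFunc (RF k l))) :=
    IsFractionRing.injective _ _
  have h2 : Function.Injective
      (Polynomial.mapRingHom (algebraMap (MvPolynomial (Fin l) k) (RF k l))) :=
    Polynomial.map_injective _ (IsFractionRing.injective _ _)
  exact fun a b hab => h2 (h1 hab)

/-- Polynomial level substitution `z_j ↦ t·z_j` for `j ∈ J`. -/
def scaleAux (k : Type) [Field k] (l : ℕ) (J : Finset (Fin l)) :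
    MvPolynomial (Fin l) k →+* Polynomial (MvPolynomial (Fin l) k) :=
  (MvPolynomial.aeval (R := k) fun i =>
    if i ∈ J then Polynomial.X * Polynomial.C (MvPolynomial.X i)
    else Polynomial.C (MvPolynomial.X i)).toRingHom

lemma scaleAux_injective (J : Finset (Fin l)) :
    Function.Injective (scaleAux k l J) := by
  have h : (Polynomial.evalRingHom (1 : MvPolynomial (Fin l) k)).comp (scaleAux k l J)
      = RingHom.id _ := by
    apply MvPolynomial.ringHom_ext
    · intro r; simp [scaleAux]
    · intro i; by_cases hi : i ∈ J <;> simp [scaleAux, hi]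
  intro p q hpq
  have hp := DFunLike.congr_fun h p
  have hq := DFunLike.congr_fun h q
  simp only [RingHom.comp_apply, RingHom.id_apply] at hp hq
  rw [← hp, ← hq, hpq]

/-- The substitution `z_j ↦ t·z_j` (for `j ∈ J`), as a map from rational functions
in `z₁,…,z_l` to rational functions in `z₁,…,z_l` and `t`.  Reading off the
coefficients of the Laurent expansion in `t` at `t = 0` of `scaleJ J α` yields the
decomposition of `α` into its homogeneous components with respect to the total degree
in the variables `{z_j : j ∈ J}`, i.e. the expansion of `α` in the domain where the
variables of `J` are much smaller than the remaining variables. -/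
def scaleJ (J : Finset (Fin l)) : RF k l →+* RatFunc (RF k l) :=
  IsFractionRing.lift (g := (toRatFuncHom k l).comp (scaleAux k l J))
    (fun a b hab => scaleAux_injective J (toRatFuncHom_injective hab))

/-- Polynomial level substitution `z_i ↦ z_j + t`. -/
def subPairAux (k : Type) [Field k] (l : ℕ) (i j : Fin l) :
    MvPolynomial (Fin l) k →+* Polynomial (MvPolynomial (Fin l) k) :=
  (MvPolynomial.aeval (R := k) fun s =>
    if s = i then Polynomial.X + Polynomial.C (MvPolynomial.X j)
    else Polynomial.C (MvPolynomial.X s)).toRingHom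

lemma subPairAux_injective (i j : Fin l) :
    Function.Injective (subPairAux k l i j) := by
  have h : (Polynomial.evalRingHom (MvPolynomial.X i - MvPolynomial.X j)).comp
      (subPairAux k l i j) = RingHom.id _ := by
    apply MvPolynomial.ringHom_ext
    · intro r; simp [subPairAux]
    · intro s; by_cases hs : s = i <;> simp [subPairAux, hs]
  intro p q hpq
  have hp := DFunLike.congr_fun h p
  have hq := DFunLike.congr_fun h q
  simp only [RingHom.comp_apply, RingHom.id_apply] at hp hq
  rw [← hp, ← hq, hpq]

/-- The substitution `z_i ↦ z_j + t`, as a map from rational functions in `z₁,…,z_l`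
to rational functions in the variables `z₁,…,z_l` and `t`.  Reading off the Laurent
coefficients in `t` at `t = 0` yields the expansion of a rational function in powers
of `z_i - z_j`, with coefficients not involving `z_i`. -/
def subPair (i j : Fin l) : RF k l →+* RatFunc (RF k l) :=
  IsFractionRing.lift (g := (toRatFuncHom k l).comp (subPairAux k l i j))
    (fun a b hab => subPairAux_injective i j (toRatFuncHom_injective hab))

end Subst

/-- The coefficient of `tᵐ` in the Laurent expansion at `t = 0` of a rational
function of `t`. -/
def lcoeff {L : Type} [Field L] (m : ℤ) (f : RatFunc L) : L :=
  (f : LaurentSeries L).coeff m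

/-- The component `(α)_n` of `α` of degree `n` with respect to the partition
`{1,…,l} = Jᶜ ⊔ J` and the weights `d`:  the part of the expansion of `α` in the
domain where the variables of `J` are much smaller than those of `Jᶜ` whose total
degree in the variables `{z_j : j ∈ J}` equals `n - Σ_{j∈J} d_j`. -/
def component {l : ℕ} (J : Finset (Fin l)) (d : Fin l → ℤ) (n : ℤ) (α : RF k l) :
    RF k l :=
  lcoeff (n - ∑ j ∈ J, d j) (scaleJ J α)

/-- `α` is homogeneous of total degree `d` in the variables `{z_i : i ∈ S}`:
substituting `z_i ↦ t·z_i` for `i ∈ S` multiplies `α` by `t^d`. -/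
def IsHomogeneousOn {l : ℕ} (S : Finset (Fin l)) (d : ℤ) (α : RF k l) : Prop :=
  scaleJ S α = RatFunc.X ^ d * RatFunc.C α

/-- `ρ^{(m)}_{ij} α`: the coefficient of `(z_i - z_j)^m` in the expansion of `α`
in powers of `z_i - z_j` (the coefficients do not involve `z_i`). -/
def rho {l : ℕ} (i j : Fin l) (m : ℤ) (α : RF k l) : RF k l :=
  lcoeff m (subPair i j α)

/-- `α` is a rational function of the variables `{z_i : i ∈ S}` only. -/
def dependsOnlyOn {l : ℕ} (S : Finset (Fin l)) (α : RF k l) : Prop :=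
  α ∈ Subfield.closure (Set.range (algebraMap k (RF k l)) ∪ {x | ∃ i ∈ S, x = zv i})

/-- `α` is an admissible function of the variables `{z_i : i ∈ S}` (the space
`R^{|S|}`):  `α ∈ Φ` is a rational function of the variables of `S` only, it is
`(4,…,4)`-regular and homogeneous of degree `-2|S|` in these variables, and all its
components of negative degree, as well as those of degree `1`, vanish (with respect
to every partition of `S` and all weights equal to `2`). -/
def Admissible {l : ℕ} (D : Fin l → Derivation k (RF k l) (RF k l)) (S : Finset (Fin l))
    (α : RF k l) : Prop :=
  α ∈ Phi k l ∧ dependsOnlyOn S α ∧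
    (∑ i ∈ S, ((zv i) ^ 2 * D i α + 4 * zv i * α)) = 0 ∧
    IsHomogeneousOn S (-(2 * (S.card : ℤ))) α ∧
    ∀ J ⊆ S, ∀ n : ℤ, (n < 0 ∨ n = 1) → component J (fun _ => 2) n α = 0

/-- `α` is an indecomposable admissible function of the variables `{z_i : i ∈ S}`
(the space `R₀^{|S|}`): admissible, and all the components `(α)₀` with respect to
partitions of `S` into two nonempty parts vanish. -/
def AdmissibleInd {l : ℕ} (D : Fin l → Derivation k (RF k l) (RF k l))
    (S : Finset (Fin l)) (α : RF k l) : Prop :=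
  Admissible D S α ∧
    ∀ J ⊆ S, J ≠ ∅ → J ≠ S → component J (fun _ => 2) 0 α = 0

section Shift

variable {l : ℕ}

/-- Polynomial level substitution `z_s ↦ z_s - z_t` for `s ∈ S`. -/
def shiftAuxP (k : Type) [Field k] (l : ℕ) (S : Finset (Fin l)) (t : Fin l) :
    MvPolynomial (Fin l) k →+* MvPolynomial (Fin l) k :=
  (MvPolynomial.aeval (R := k) fun s =>
    if s ∈ S then MvPolynomial.X s - MvPolynomial.X t else MvPolynomial.X s).toRingHom

lemma shiftAuxP_injective (S : Finset (Fin l)) (t : Fin l) (ht : t ∉ S) :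
    Function.Injective (shiftAuxP k l S t) := by
  have h : ((MvPolynomial.aeval (R := k) fun s =>
      if s ∈ S then MvPolynomial.X s + MvPolynomial.X t
      else MvPolynomial.X s).toRingHom).comp (shiftAuxP k l S t) = RingHom.id _ := by
    apply MvPolynomial.ringHom_ext
    · intro r; simp [shiftAuxP]
    · intro s
      by_cases hs : s ∈ S
      · have hst : s ≠ t := fun hst => ht (hst ▸ hs)
        simp [shiftAuxP, hs, ht]
      · simp [shiftAuxP, hs]
  intro p q hpq
  have hp := DFunLike.congr_fun h p
  have hq := DFunLike.congr_fun h q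
  simp only [RingHom.comp_apply, RingHom.id_apply] at hp hq
  rw [← hp, ← hq, hpq]

/-- The shift operator substituting `z_s - z_t` for `z_s`, for all `s ∈ S`. -/
def shiftT (S : Finset (Fin l)) (t : Fin l) (ht : t ∉ S) : RF k l →+* RF k l :=
  IsFractionRing.lift
    (g := (algebraMap (MvPolynomial (Fin l) k) (RF k l)).comp (shiftAuxP k l S t))
    (fun a b hab =>
      shiftAuxP_injective S t ht (IsFractionRing.injective _ _ hab))

/-- The operator `ℰ = Σ_{s ∈ S} (-z_s⁻¹ ∂_{z_s} + 2 z_s⁻²)`. -/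
def curlyE {l : ℕ} (D : Fin l → Derivation k (RF k l) (RF k l)) (S : Finset (Fin l))
    (β : RF k l) : RF k l :=
  ∑ s ∈ S, (-((zv s)⁻¹ * D s β) + 2 * (zv s) ^ (-2 : ℤ) * β)

end Shift

end Griess

namespace Griess
set_option synthInstance.maxHeartbeats 1000000
set_option maxHeartbeats 1000000

open scoped TensorProduct DirectSum

/-- The linear map, given by multiplication of rational functions, from the direct
sum — over all unordered partitions `P` of `{1,…,l}` into nonempty blocks — of the
tensor products, over the blocks `B` of `P`, of the spaces `R₀^{|B|}` of
indecomposable admissible functions of the variables `{z_i : i ∈ B}`, into the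
field of rational functions. -/
noncomputable def productMap {k : Type} [Field k] {l : ℕ}
    (D : Fin l → Derivation k (RF k l) (RF k l)) :
    (⨁ P : Finpartition (Finset.univ : Finset (Fin l)),
        ⨂[k] B : ↥P.parts,
          ↥(Submodule.span k {α : RF k l | AdmissibleInd D (↑B) α})) →ₗ[k] RF k l :=
  DirectSum.toModule k (Finpartition (Finset.univ : Finset (Fin l))) (RF k l)
    (fun P => PiTensorProduct.lift
      ((MultilinearMap.mkPiAlgebra k ↥P.parts (RF k l)).compLinearMap
        (fun B => (Submodule.span k {α : RF k l | AdmissibleInd D (↑B) α}).subtype)))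

/-!
The component `T_J x = (x)₀` of an admissible function `x` with respect to the partition `I ⊔ J` is
its leading component, because the components of negative index vanish; as the next one vanishes
too, `T_J x` satisfies the equations defining admissibility in the variables of `I` and of `J`
separately. By linear disjointness it is therefore an element of `R(I) · R(J)`. The operators `T_J`
are idempotent and commute with each other, so replacing `x` by `x - T_J x` for one partition after
the other makes all leading components vanish. What is split off is a sum of products of admissible
functions of fewer variables, and by induction `x` is a sum of products of indecomposable functions.

For uniqueness, `T_J` multiplies a product of indecomposable functions along a set partition `P` by
`1` if `J` is a union of blocks of `P`, and by `0` otherwise. Since `P` is determined by the unions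
of its blocks, the components of a sum along different `P` are separated by the operators `T_J`.
Functions of disjoint sets of variables are linearly disjoint over `k`, so for a single `P` the
multiplication map is injective on the tensor product.
-/

/-! ### Laurent series -/

section LaurentSeries

variable {K : Type} [Field K]

lemma exists_forall_lt_coeff_eq_zero (f : LaurentSeries K) :
    ∃ a : ℤ, ∀ n < a, f.coeff n = 0 :=
  ⟨f.order, fun _ => HahnSeries.coeff_eq_zero_of_lt_order⟩

section Mul

variable {f g : LaurentSeries K} {a b : ℤ} (hf : ∀ n < a, f.coeff n = 0)
  (hg : ∀ n < b, g.coeff n = 0)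
include hf hg

lemma coeff_mul_eq_sum_Icc (n : ℤ) :
    (f * g).coeff n = ∑ i ∈ Finset.Icc a (n - b), f.coeff i * g.coeff (n - i) := by
  rw [HahnSeries.coeff_mul]
  refine Finset.sum_of_injOn Prod.fst ?_ ?_ ?_ ?_
  · rintro ⟨i, j⟩ hij ⟨i', j'⟩ hij' h
    simp only [Finset.mem_coe, Finset.mem_antidiagonal] at hij hij' h
    simp only [Prod.mk.injEq]
    omega
  · rintro ⟨i, j⟩ hij
    simp only [Finset.mem_coe, Finset.mem_antidiagonal, HahnSeries.mem_support] at hij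
    obtain ⟨hi, hj, rfl⟩ := hij
    have hai : a ≤ i := not_lt.1 (mt (hf i) hi)
    have hbj : b ≤ j := not_lt.1 (mt (hg j) hj)
    simp only [Finset.coe_Icc, Set.mem_Icc]
    omega
  · intro i _ hi
    by_contra hne
    exact hi ⟨(i, n - i), by
      simp [left_ne_zero_of_mul hne, right_ne_zero_of_mul hne], rfl⟩
  · rintro ⟨i, j⟩ hij
    simp only [Finset.mem_antidiagonal] at hij
    obtain ⟨-, -, rfl⟩ := hij
    rw [add_sub_cancel_left]

lemma coeff_mul_eq_zero_of_lt_add {n : ℤ} (hn : n < a + b) : (f * g).coeff n = 0 := by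
  rw [coeff_mul_eq_sum_Icc hf hg, Finset.Icc_eq_empty (by lia), Finset.sum_empty]

lemma coeff_mul_add : (f * g).coeff (a + b) = f.coeff a * g.coeff b := by
  rw [coeff_mul_eq_sum_Icc hf hg]
  simp

lemma coeff_mul_add_add_one_eq_zero (hf' : f.coeff (a + 1) = 0) (hg' : g.coeff (b + 1) = 0) :
    (f * g).coeff (a + b + 1) = 0 := by
  rw [coeff_mul_eq_sum_Icc hf hg]
  refine Finset.sum_eq_zero fun i hi => ?_
  obtain rfl | rfl : i = a ∨ i = a + 1 := by
    rw [Finset.mem_Icc] at hi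
    omega
  · rw [add_assoc, add_sub_cancel_left, hg', mul_zero]
  · rw [hf', zero_mul]

end Mul

section Derivation

variable {k : Type} [Field k] [Algebra k K]

/-- The derivation `c · t d/dt + d` of the field of Laurent series in `t`, where the derivation `d`
of the coefficient field acts coefficientwise. -/
def laurentDeriv (c : K) (d : Derivation k K K) : LaurentSeries K →+ LaurentSeries K where
  toFun f :=
    { coeff := fun n => c * n * f.coeff n + d (f.coeff n)
      isPWO_support' := f.isPWO_support.mono fun n hn h0 => hn (by simp [h0]) }
  map_zero' := by ext n; simp
  map_add' f g := by ext n; simp; ring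

@[simp]
lemma coeff_laurentDeriv (c : K) (d : Derivation k K K) (f : LaurentSeries K) (n : ℤ) :
    (laurentDeriv c d f).coeff n = c * n * f.coeff n + d (f.coeff n) := rfl

lemma laurentDeriv_mul (c : K) (d : Derivation k K K) (f g : LaurentSeries K) :
    laurentDeriv c d (f * g) = f * laurentDeriv c d g + g * laurentDeriv c d f := by
  obtain ⟨a, ha⟩ := exists_forall_lt_coeff_eq_zero f
  obtain ⟨b, hb⟩ := exists_forall_lt_coeff_eq_zero g
  have ha' : ∀ n < a, (laurentDeriv c d f).coeff n = 0 := fun n hn => by simp [ha n hn]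
  have hb' : ∀ n < b, (laurentDeriv c d g).coeff n = 0 := fun n hn => by simp [hb n hn]
  ext n
  rw [mul_comm g, HahnSeries.coeff_add, coeff_laurentDeriv, coeff_mul_eq_sum_Icc ha hb,
    coeff_mul_eq_sum_Icc ha hb', coeff_mul_eq_sum_Icc ha' hb, map_sum, Finset.mul_sum,
    ← Finset.sum_add_distrib, ← Finset.sum_add_distrib]
  refine Finset.sum_congr rfl fun i _ => ?_
  rw [coeff_laurentDeriv, coeff_laurentDeriv, Derivation.leibniz]
  push_cast
  simp only [smul_eq_mul]
  ring

lemma laurentDeriv_single (c : K) (d : Derivation k K K) (m : ℤ) (x : K) :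
    laurentDeriv c d (HahnSeries.single m x) = HahnSeries.single m (c * m * x + d x) := by
  ext n
  obtain rfl | hn := eq_or_ne n m
  · simp
  · simp [HahnSeries.coeff_single_of_ne hn]

end Derivation

/-- The homomorphism of Laurent series fields applying `φ` to all coefficients. -/
def laurentMap {L : Type} [Field L] (φ : L →+* K) : LaurentSeries L →+* LaurentSeries K where
  toFun f := f.map φ
  map_zero' := by ext; simp
  map_one' := HahnSeries.map_one φ.toMonoidWithZeroHom
  map_add' f g := HahnSeries.map_add φ.toAddMonoidHom
  map_mul' f g := HahnSeries.map_mul (φ : L →ₙ+* K)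

@[simp]
lemma coeff_laurentMap {L : Type} [Field L] (φ : L →+* K) (f : LaurentSeries L) (n : ℤ) :
    (laurentMap φ f).coeff n = φ (f.coeff n) := rfl

@[simp]
lemma laurentMap_single {L : Type} [Field L] (φ : L →+* K) (m : ℤ) (x : L) :
    laurentMap φ (HahnSeries.single m x) = HahnSeries.single m (φ x) :=
  HahnSeries.map_single φ.toMonoidWithZeroHom.toZeroHom

@[simp]
lemma laurentMap_C {L : Type} [Field L] (φ : L →+* K) (x : L) :
    laurentMap φ (HahnSeries.C x) = HahnSeries.C (φ x) :=
  laurentMap_single φ 0 x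

/-- The subring of those `x` whose iterated expansion, first by `F` and then coefficientwise by `E`,
agrees with the one in the opposite order. -/
def commutingSubring (E F : K →+* LaurentSeries K) : Subring K where
  carrier := {x | ∀ n m : ℤ, (E ((F x).coeff m)).coeff n = (F ((E x).coeff n)).coeff m}
  zero_mem' := by intro n m; simp
  one_mem' := by
    intro n m
    simp only [map_one, HahnSeries.coeff_one]
    split_ifs <;> simp [HahnSeries.coeff_one, *]
  add_mem' := by
    intro x y hx hy n m
    simp only [map_add, HahnSeries.coeff_add, hx n m, hy n m]
  neg_mem' := by
    intro x hx n m
    simp only [map_neg, HahnSeries.coeff_neg, hx n m]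
  mul_mem' := by
    intro x y hx hy n m
    obtain ⟨a, ha⟩ := exists_forall_lt_coeff_eq_zero (E x)
    obtain ⟨b, hb⟩ := exists_forall_lt_coeff_eq_zero (E y)
    obtain ⟨c, hc⟩ := exists_forall_lt_coeff_eq_zero (F x)
    obtain ⟨d, hd⟩ := exists_forall_lt_coeff_eq_zero (F y)
    have hE : ∀ i ∈ Finset.Icc c (m - d), (E ((F x).coeff i * (F y).coeff (m - i))).coeff n =
        ∑ j ∈ Finset.Icc a (n - b), (E ((F x).coeff i)).coeff j *
          (E ((F y).coeff (m - i))).coeff (n - j) := fun i _ => by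
      rw [map_mul]
      exact coeff_mul_eq_sum_Icc (fun j hj => by rw [hx, ha j hj]; simp)
        (fun j hj => by rw [hy, hb j hj]; simp) n
    have hF : ∀ j ∈ Finset.Icc a (n - b), (F ((E x).coeff j * (E y).coeff (n - j))).coeff m =
        ∑ i ∈ Finset.Icc c (m - d), (F ((E x).coeff j)).coeff i *
          (F ((E y).coeff (n - j))).coeff (m - i) := fun j _ => by
      rw [map_mul]
      exact coeff_mul_eq_sum_Icc (fun i hi => by rw [← hx, hc i hi]; simp)
        (fun i hi => by rw [← hy, hd i hi]; simp) m
    rw [map_mul, map_mul, coeff_mul_eq_sum_Icc hc hd, coeff_mul_eq_sum_Icc ha hb, map_sum, map_sum,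
      HahnSeries.coeff_sum, HahnSeries.coeff_sum, Finset.sum_congr rfl hE,
      Finset.sum_congr rfl hF, Finset.sum_comm]
    simp only [hx _ _, hy _ _]

lemma mem_commutingSubring {E F : K →+* LaurentSeries K} {x : K} :
    x ∈ commutingSubring E F ↔
      ∀ n m : ℤ, (E ((F x).coeff m)).coeff n = (F ((E x).coeff n)).coeff m := Iff.rfl

lemma mem_commutingSubring_of_eq_single {E F : K →+* LaurentSeries K} {x : K} {a b : ℤ}
    (hE : E x = HahnSeries.single a x) (hF : F x = HahnSeries.single b x) :
    x ∈ commutingSubring E F := by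
  intro n m
  rw [hE, hF, HahnSeries.coeff_single, HahnSeries.coeff_single, apply_ite E, apply_ite F, hE, hF,
    map_zero, map_zero]
  split_ifs with hm hn hn <;> simp [hm, hn]

end LaurentSeries

/-! ### Fields of rational functions in some of the variables -/

section VarField

variable {k : Type} [Field k] {l : ℕ}

lemma zv_ne_zero (i : Fin l) : (zv i : RF k l) ≠ 0 := by
  simp [zv]

lemma algebraMap_C_eq (c : k) :
    algebraMap (MvPolynomial (Fin l) k) (RF k l) (MvPolynomial.C c) = algebraMap k (RF k l) c := by
  rw [← MvPolynomial.algebraMap_eq, ← IsScalarTower.algebraMap_apply]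

/-- The field `k(zᵢ : i ∈ S)`; it consists of the `α` with `dependsOnlyOn S α`. -/
def varField (k : Type) [Field k] {l : ℕ} (S : Finset (Fin l)) : IntermediateField k (RF k l) :=
  IntermediateField.adjoin k {x | ∃ i ∈ S, x = zv i}

lemma dependsOnlyOn_iff {S : Finset (Fin l)} {x : RF k l} :
    dependsOnlyOn S x ↔ x ∈ varField k S := Iff.rfl

lemma zv_mem_varField {S : Finset (Fin l)} {i : Fin l} (hi : i ∈ S) :
    (zv i : RF k l) ∈ varField k S :=
  IntermediateField.subset_adjoin k _ ⟨i, hi, rfl⟩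

lemma varField_le {S : Finset (Fin l)} {F : IntermediateField k (RF k l)}
    (h : ∀ i ∈ S, (zv i : RF k l) ∈ F) : varField k S ≤ F :=
  IntermediateField.adjoin_le_iff.2 fun _ ⟨i, hi, hx⟩ => hx ▸ h i hi

lemma varField_mono {S T : Finset (Fin l)} (h : S ⊆ T) : varField k S ≤ varField k T :=
  varField_le fun _ hi => zv_mem_varField (h hi)

lemma algebraMap_mem_adjoin_range_zv (p : MvPolynomial (Fin l) k) :
    algebraMap (MvPolynomial (Fin l) k) (RF k l) p ∈
      Algebra.adjoin k (Set.range (zv : Fin l → RF k l)) := by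
  induction p using MvPolynomial.induction_on with
  | C c => rw [algebraMap_C_eq]; exact algebraMap_mem _ c
  | add p q hp hq => rw [map_add]; exact add_mem hp hq
  | mul_X p i hp => rw [map_mul]; exact mul_mem hp (Algebra.subset_adjoin ⟨i, rfl⟩)

lemma algebraMap_mem_varField_univ (p : MvPolynomial (Fin l) k) :
    algebraMap (MvPolynomial (Fin l) k) (RF k l) p ∈ varField k (Finset.univ : Finset (Fin l)) := by
  refine (Algebra.adjoin_le (S := (varField k Finset.univ).toSubalgebra) ?_)
    (algebraMap_mem_adjoin_range_zv p)
  rintro _ ⟨i, rfl⟩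
  exact zv_mem_varField (Finset.mem_univ i)

lemma varField_univ : varField k (Finset.univ : Finset (Fin l)) = ⊤ := by
  refine eq_top_iff.2 fun x _ => ?_
  obtain ⟨p, q, -, rfl⟩ := IsFractionRing.div_surjective (A := MvPolynomial (Fin l) k) x
  exact div_mem (algebraMap_mem_varField_univ p) (algebraMap_mem_varField_univ q)

lemma mem_varField_univ (x : RF k l) : x ∈ varField k (Finset.univ : Finset (Fin l)) :=
  varField_univ (k := k) ▸ IntermediateField.mem_top

lemma ringHom_eqOn_varField {L : Type} [Field L] {S : Finset (Fin l)} {φ ψ : RF k l →+* L}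
    (hconst : ∀ c, φ (algebraMap k (RF k l) c) = ψ (algebraMap k (RF k l) c))
    (hzv : ∀ i ∈ S, φ (zv i) = ψ (zv i)) : Set.EqOn φ ψ (varField k S) :=
  fun _ hx => varField_le (F := (φ.eqLocusField ψ).toIntermediateField hconst) hzv hx

lemma twistedDerivation_eq_zero_on_varField {L : Type} [Field L] {S : Finset (Fin l)}
    {φ : RF k l →+* L} {d : RF k l →+ L} (hmul : ∀ x y, d (x * y) = φ x * d y + φ y * d x)
    (hconst : ∀ c, d (algebraMap k (RF k l) c) = 0) (hzv : ∀ i ∈ S, d (zv i) = 0)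
    {x : RF k l} (hx : x ∈ varField k S) : d x = 0 := by
  refine IntermediateField.adjoin_induction (p := fun x _ => d x = 0) k ?_ hconst ?_ ?_ ?_ hx
  · rintro _ ⟨i, hi, rfl⟩
    exact hzv i hi
  · intro x y _ _ hx hy
    rw [map_add, hx, hy, add_zero]
  · intro x _ hx
    obtain rfl | hx0 := eq_or_ne x 0
    · simp
    have h := hmul x x⁻¹
    rw [mul_inv_cancel₀ hx0, hx, mul_zero, add_zero, ← map_one (algebraMap k (RF k l)),
      hconst] at h
    exact (mul_eq_zero.1 h.symm).resolve_left (by simpa using hx0)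
  · intro x y _ _ hx hy
    rw [hmul, hx, hy, mul_zero, mul_zero, add_zero]

section PartialDeriv

variable {D : Fin l → Derivation k (RF k l) (RF k l)} (hD : IsPartialDeriv D)
include hD

lemma partialDeriv_eq_zero_of_notMem {S : Finset (Fin l)} {i : Fin l} (hi : i ∉ S) {x : RF k l}
    (hx : x ∈ varField k S) : D i x = 0 :=
  twistedDerivation_eq_zero_on_varField (φ := RingHom.id _)
    (d := (D i).toLinearMap.toAddMonoidHom) (by simp) (by simp)
    (fun j hj => (hD i j).trans (if_neg (ne_of_mem_of_not_mem hj hi))) hx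

lemma partialDeriv_mem_varField {S : Finset (Fin l)} (i : Fin l) {x : RF k l}
    (hx : x ∈ varField k S) : D i x ∈ varField k S := by
  refine IntermediateField.adjoin_induction (p := fun x _ => D i x ∈ varField k S) k ?_ ?_ ?_ ?_ ?_
    hx
  · rintro _ ⟨j, -, rfl⟩
    rw [hD]
    split_ifs
    exacts [one_mem _, zero_mem _]
  · intro c
    rw [Derivation.map_algebraMap]
    exact zero_mem _
  · intro x y _ _ hx hy
    rw [map_add]
    exact add_mem hx hy
  · intro x hxS hx
    rw [Derivation.leibniz_inv]
    exact mul_mem (neg_mem (pow_mem (inv_mem hxS) 2)) hx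
  · intro x y hxS hyS hx hy
    rw [Derivation.leibniz]
    exact add_mem (mul_mem hxS hy) (mul_mem hyS hx)

end PartialDeriv

end VarField

/-! ### Expansions -/

section Expansion

open scoped RatFunc

variable {k : Type} [Field k] {l : ℕ}

/-- The expansion of a rational function in the domain where the variables of `J` are much smaller
than the others: the coefficient of `tⁿ` is the part of total degree `n` in these variables. -/
def expansion (J : Finset (Fin l)) : RF k l →+* LaurentSeries (RF k l) :=
  (algebraMap (RatFunc (RF k l)) (LaurentSeries (RF k l))).comp (scaleJ J)

lemma component_two_eq_coeff_expansion (J : Finset (Fin l)) (n : ℤ) (x : RF k l) :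
    component J (fun _ => 2) n x = (expansion J x).coeff (n - 2 * J.card) := by
  rw [component, Finset.sum_const, nsmul_eq_mul, mul_comm]
  rfl

/-- The polynomial in `t` obtained from a polynomial by substituting `z_j ↦ t·z_j` for `j ∈ J`. -/
def scalePoly (J : Finset (Fin l)) (p : MvPolynomial (Fin l) k) : Polynomial (RF k l) :=
  (scaleAux k l J p).map (algebraMap (MvPolynomial (Fin l) k) (RF k l))

lemma expansion_algebraMap (J : Finset (Fin l)) (p : MvPolynomial (Fin l) k) :
    expansion J (algebraMap (MvPolynomial (Fin l) k) (RF k l) p) =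
      algebraMap (Polynomial (RF k l)) (LaurentSeries (RF k l)) (scalePoly J p) := by
  have h := IsFractionRing.lift_algebraMap (K := RF k l)
    (g := (toRatFuncHom k l).comp (scaleAux k l J))
    (fun _ _ hab => scaleAux_injective J (toRatFuncHom_injective hab)) p
  rw [expansion, RingHom.comp_apply, scaleJ, h, toRatFuncHom, RingHom.comp_apply,
    RingHom.comp_apply, ← IsScalarTower.algebraMap_apply]
  rfl

@[simp]
lemma expansion_const (J : Finset (Fin l)) (c : k) :
    expansion J (algebraMap k (RF k l) c) = HahnSeries.C (algebraMap k (RF k l) c) := by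
  rw [← algebraMap_C_eq, expansion_algebraMap]
  simp [scalePoly, scaleAux, MvPolynomial.algebraMap_eq]

lemma expansion_zv (J : Finset (Fin l)) (i : Fin l) :
    expansion J (zv i : RF k l) = HahnSeries.single (if i ∈ J then 1 else 0) (zv i) := by
  rw [zv, expansion_algebraMap]
  by_cases hi : i ∈ J <;> simp [scalePoly, scaleAux, hi, HahnSeries.C_apply]

lemma expansion_zv_of_mem {J : Finset (Fin l)} {i : Fin l} (hi : i ∈ J) :
    expansion J (zv i : RF k l) = HahnSeries.single 1 (zv i) := by
  rw [expansion_zv, if_pos hi]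

lemma expansion_zv_of_notMem {J : Finset (Fin l)} {i : Fin l} (hi : i ∉ J) :
    expansion J (zv i : RF k l) = HahnSeries.C (zv i) := by
  rw [expansion_zv, if_neg hi, HahnSeries.C_apply]

lemma expansion_smul (J : Finset (Fin l)) (c : k) (x : RF k l) :
    expansion J (c • x) = HahnSeries.C (algebraMap k (RF k l) c) * expansion J x := by
  rw [Algebra.smul_def, map_mul, expansion_const]

lemma expansion_eq_of_inter_eq {J J' S : Finset (Fin l)} (h : J ∩ S = J' ∩ S) {x : RF k l}
    (hx : x ∈ varField k S) : expansion J x = expansion J' x := by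
  refine ringHom_eqOn_varField (fun c => by rw [expansion_const, expansion_const]) ?_ hx
  intro i hi
  have hiff : i ∈ J ↔ i ∈ J' := by simpa [hi] using Finset.ext_iff.1 h i
  rw [expansion_zv, expansion_zv, if_congr hiff rfl rfl]

lemma expansion_eq_C {J S : Finset (Fin l)} (h : Disjoint J S) {x : RF k l}
    (hx : x ∈ varField k S) : expansion J x = HahnSeries.C x :=
  ringHom_eqOn_varField (expansion_const J)
    (fun _ hi => expansion_zv_of_notMem (Finset.disjoint_right.1 h hi)) hx

lemma coeff_expansion_mem_varField {J S : Finset (Fin l)} {x : RF k l} (hx : x ∈ varField k S)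
    (n : ℤ) : (expansion J x).coeff n ∈ varField k S := by
  let L := ((laurentMap (varField k S).toSubfield.subtype).fieldRange.comap
    (expansion J)).toIntermediateField fun c =>
      ⟨HahnSeries.C ⟨_, (varField k S).algebraMap_mem c⟩, by
        rw [laurentMap_C, expansion_const]; rfl⟩
  obtain ⟨f, hf⟩ := varField_le (F := L) (fun i hi =>
    ⟨HahnSeries.single _ ⟨_, zv_mem_varField hi⟩, by rw [laurentMap_single, expansion_zv]; rfl⟩) hx
  rw [← hf]
  exact (f.coeff n).2

lemma eval_one_scalePoly (J : Finset (Fin l)) (p : MvPolynomial (Fin l) k) :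
    (scalePoly J p).eval 1 = algebraMap (MvPolynomial (Fin l) k) (RF k l) p := by
  have h : ((Polynomial.evalRingHom 1).comp (Polynomial.mapRingHom
      (algebraMap (MvPolynomial (Fin l) k) (RF k l)))).comp (scaleAux k l J) =
        algebraMap (MvPolynomial (Fin l) k) (RF k l) := by
    refine MvPolynomial.ringHom_ext (fun r => by simp [scaleAux]) fun i => ?_
    by_cases hi : i ∈ J <;> simp [scaleAux, hi]
  exact DFunLike.congr_fun h p

lemma algebraMap_polynomial_laurentSeries_injective (K : Type) [Field K] :
    Function.Injective (algebraMap (Polynomial K) (LaurentSeries K)) := by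
  rw [IsScalarTower.algebraMap_eq (Polynomial K) (RatFunc K) (LaurentSeries K)]
  exact (algebraMap (RatFunc K) (LaurentSeries K)).injective.comp
    (IsFractionRing.injective (Polynomial K) (RatFunc K))

/-- Substituting `t = 1` into the expansion of a homogeneous function recovers the function. -/
lemma eq_of_expansion_eq_single {J : Finset (Fin l)} {x y : RF k l} {n : ℤ}
    (h : expansion J x = HahnSeries.single n y) : y = x := by
  obtain ⟨a, b, rfl⟩ : ∃ a b : ℕ, n = (a : ℤ) - b := ⟨n.toNat, (-n).toNat, by omega⟩
  obtain ⟨p, q, hq, rfl⟩ := IsFractionRing.div_surjective (A := MvPolynomial (Fin l) k) x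
  have hq0 : algebraMap (MvPolynomial (Fin l) k) (RF k l) q ≠ 0 := by
    simpa using nonZeroDivisors.ne_zero hq
  have hX (m : ℕ) : algebraMap (Polynomial (RF k l)) (LaurentSeries (RF k l)) (Polynomial.X ^ m) =
      HahnSeries.single (m : ℤ) 1 := by simp
  have hC : algebraMap (Polynomial (RF k l)) (LaurentSeries (RF k l)) (Polynomial.C y) =
      HahnSeries.single 0 y := by simp [HahnSeries.C_apply]
  rw [map_div₀, div_eq_iff (by simpa using hq0), expansion_algebraMap, expansion_algebraMap] at h
  have hpoly : scalePoly J p * Polynomial.X ^ b =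
      Polynomial.C y * Polynomial.X ^ a * scalePoly J q := by
    apply algebraMap_polynomial_laurentSeries_injective
    rw [map_mul, map_mul, map_mul, h, hX, hX, hC, mul_right_comm, HahnSeries.single_mul_single,
      HahnSeries.single_mul_single]
    simp
  have heval := congrArg (Polynomial.eval 1) hpoly
  simp only [Polynomial.eval_mul, eval_one_scalePoly, Polynomial.eval_pow, Polynomial.eval_X,
    one_pow, mul_one, Polynomial.eval_C] at heval
  rw [heval, mul_div_cancel_right₀ _ hq0]

lemma isHomogeneousOn_iff {S : Finset (Fin l)} {d : ℤ} {x : RF k l} :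
    IsHomogeneousOn S d x ↔ expansion S x = HahnSeries.single d x := by
  have h : algebraMap (RatFunc (RF k l)) (LaurentSeries (RF k l))
      (RatFunc.X ^ d * RatFunc.C x) = HahnSeries.single d x := by
    have hX : algebraMap (RatFunc (RF k l)) (LaurentSeries (RF k l)) RatFunc.X =
        HahnSeries.single 1 1 := RatFunc.coe_X
    rw [map_mul, map_zpow₀, hX, ← RatFunc.single_zpow, ← RatFunc.algebraMap_C,
      ← IsScalarTower.algebraMap_apply]
    simp [HahnSeries.C_apply]
  rw [IsHomogeneousOn, ← (algebraMap (RatFunc (RF k l)) (LaurentSeries (RF k l))).injective.eq_iff,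
    h]
  rfl

end Expansion

section WittField

variable {k : Type} [Field k] {l : ℕ}

lemma expansion_zv_pow_of_mem {J : Finset (Fin l)} {i : Fin l} (hi : i ∈ J) (e : ℕ) :
    expansion J (zv i ^ e : RF k l) = HahnSeries.single (e : ℤ) (zv i ^ e) := by
  simp [map_pow, expansion_zv_of_mem hi, HahnSeries.single_pow]

lemma expansion_zv_pow_of_notMem {J : Finset (Fin l)} {i : Fin l} (hi : i ∉ J) (e : ℕ) :
    expansion J (zv i ^ e : RF k l) = HahnSeries.C (zv i ^ e) := by
  rw [map_pow, expansion_zv_of_notMem hi, map_pow]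

/-- The vector field `Σ_{i ∈ S} zᵢᵉ ∂ᵢ`. The cases `e = 0, 1, 2` are the translation operator `Δ`,
the Euler operator and the leading part of `Δ*`, which span a copy of `sl₂`. -/
def wittField (D : Fin l → Derivation k (RF k l) (RF k l)) (e : ℕ) (S : Finset (Fin l)) :
    Derivation k (RF k l) (RF k l) :=
  ∑ i ∈ S, (zv i ^ e : RF k l) • D i

variable {D : Fin l → Derivation k (RF k l) (RF k l)}

lemma wittField_apply (e : ℕ) (S : Finset (Fin l)) (x : RF k l) :
    wittField D e S x = ∑ i ∈ S, zv i ^ e * D i x := by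
  let ev : Derivation k (RF k l) (RF k l) →+ RF k l :=
    (Pi.evalAddMonoidHom _ x).comp Derivation.coeFnAddMonoidHom
  exact map_sum ev _ S

variable (hD : IsPartialDeriv D)
include hD

lemma wittField_zv (e : ℕ) (S : Finset (Fin l)) (i : Fin l) :
    wittField D e S (zv i) = if i ∈ S then zv i ^ e else 0 := by
  simp [wittField_apply, hD _ i]

lemma expansion_partialDeriv (J : Finset (Fin l)) (i : Fin l) (x : RF k l) :
    HahnSeries.single (if i ∈ J then 1 else 0) 1 * expansion J (D i x) =
      laurentDeriv 0 (D i) (expansion J x) := by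
  rw [← sub_eq_zero]
  refine twistedDerivation_eq_zero_on_varField (φ := expansion J)
    (d := (AddMonoidHom.mulLeft _).comp
      ((expansion J).toAddMonoidHom.comp (D i).toLinearMap.toAddMonoidHom) -
        (laurentDeriv 0 (D i)).comp (expansion J).toAddMonoidHom) ?_ ?_ ?_ (mem_varField_univ x)
  · intro x y
    simp [laurentDeriv_mul]
    ring
  · intro c
    simp [laurentDeriv_single]
  · intro j _
    obtain rfl | hij := eq_or_ne j i
    · simp [expansion_zv, laurentDeriv_single, hD j j]
    · simp [expansion_zv, laurentDeriv_single, hD i j, hij]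

lemma coeff_expansion_partialDeriv_of_mem {J : Finset (Fin l)} {i : Fin l} (hi : i ∈ J)
    (x : RF k l) (n : ℤ) :
    (expansion J (D i x)).coeff n = D i ((expansion J x).coeff (n + 1)) := by
  have h := congrArg (fun f => f.coeff (n + 1)) (expansion_partialDeriv hD J i x)
  simpa [hi, HahnSeries.coeff_single_mul_add] using h

lemma coeff_expansion_partialDeriv_of_notMem {J : Finset (Fin l)} {i : Fin l} (hi : i ∉ J)
    (x : RF k l) (n : ℤ) : (expansion J (D i x)).coeff n = D i ((expansion J x).coeff n) := by
  have h := congrArg (fun f => f.coeff n) (expansion_partialDeriv hD J i x)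
  simpa [hi] using h

lemma coeff_expansion_wittField (e : ℕ) (J S : Finset (Fin l)) (x : RF k l) (n : ℤ) :
    (expansion J (wittField D e S x)).coeff n =
      wittField D e (S ∩ J) ((expansion J x).coeff (n - e + 1)) +
        wittField D e (S \ J) ((expansion J x).coeff n) := by
  simp only [wittField_apply, map_sum, HahnSeries.coeff_sum]
  rw [← Finset.sum_inter_add_sum_sdiff S J]
  congr 1 <;> refine Finset.sum_congr rfl fun i hi => ?_
  · have hiJ := (Finset.mem_inter.1 hi).2
    rw [map_mul, expansion_zv_pow_of_mem hiJ, ← coeff_expansion_partialDeriv_of_mem hD hiJ,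
      ← HahnSeries.coeff_single_mul_add, sub_add_cancel]
  · have hiJ := (Finset.mem_sdiff.1 hi).2
    rw [map_mul, expansion_zv_pow_of_notMem hiJ, HahnSeries.C_mul_eq_smul, HahnSeries.coeff_smul,
      smul_eq_mul, coeff_expansion_partialDeriv_of_notMem hD hiJ]

lemma expansion_wittField_one (J : Finset (Fin l)) (x : RF k l) :
    expansion J (wittField D 1 J x) =
      laurentDeriv 1 (0 : Derivation k (RF k l) (RF k l)) (expansion J x) := by
  rw [← sub_eq_zero]
  refine twistedDerivation_eq_zero_on_varField (φ := expansion J)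
    (d := (expansion J).toAddMonoidHom.comp (wittField D 1 J).toLinearMap.toAddMonoidHom -
      (laurentDeriv 1 (0 : Derivation k (RF k l) (RF k l))).comp (expansion J).toAddMonoidHom)
    ?_ ?_ ?_ (mem_varField_univ x)
  · intro x y
    simp [laurentDeriv_mul]
    ring
  · intro c
    simp [laurentDeriv_single]
  · intro j _
    by_cases hj : j ∈ J <;> simp [wittField_zv hD, expansion_zv, laurentDeriv_single, hj]

end WittField

section PolyTranslation

variable {k : Type} [Field k] {l : ℕ}

/-- The translation operator `Σ_{i ∈ J} ∂ᵢ` on polynomials. -/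
def polyTranslation (k : Type) [Field k] {l : ℕ} (J : Finset (Fin l)) :
    Derivation k (MvPolynomial (Fin l) k) (MvPolynomial (Fin l) k) :=
  ∑ i ∈ J, MvPolynomial.pderiv i

lemma polyTranslation_apply (J : Finset (Fin l)) (p : MvPolynomial (Fin l) k) :
    polyTranslation k J p = ∑ i ∈ J, MvPolynomial.pderiv i p := by
  let ev : Derivation k (MvPolynomial (Fin l) k) (MvPolynomial (Fin l) k) →+
      MvPolynomial (Fin l) k := (Pi.evalAddMonoidHom _ p).comp Derivation.coeFnAddMonoidHom
  exact map_sum ev _ J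

lemma polyTranslation_X (J : Finset (Fin l)) (i : Fin l) :
    polyTranslation k J (MvPolynomial.X i) = if i ∈ J then 1 else 0 := by
  simp [polyTranslation_apply, MvPolynomial.pderiv_X, Pi.single_apply]

lemma totalDegree_polyTranslation_lt {J : Finset (Fin l)} {p : MvPolynomial (Fin l) k}
    (h : polyTranslation k J p ≠ 0) : (polyTranslation k J p).totalDegree < p.totalDegree := by
  have hcoeff (m : Fin l →₀ ℕ) (hm : m ∈ (polyTranslation k J p).support) :
      m.degree < p.totalDegree := by
    contrapose! hm
    rw [MvPolynomial.notMem_support_iff, polyTranslation_apply, MvPolynomial.coeff_sum]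
    refine Finset.sum_eq_zero fun i _ => ?_
    rw [MvPolynomial.coeff_pderiv, MvPolynomial.coeff_eq_zero_of_totalDegree_lt, zero_mul]
    change _ < (m + Finsupp.single i 1).degree
    rw [map_add, Finsupp.degree_single]
    omega
  obtain ⟨m, hm⟩ := MvPolynomial.support_nonempty.2 h
  exact (Finset.sup_lt_iff ((Nat.zero_le _).trans_lt (hcoeff m hm))).2 hcoeff

lemma polyTranslation_eq_zero_of_dvd {J : Finset (Fin l)} {q : MvPolynomial (Fin l) k}
    (h : q ∣ polyTranslation k J q) : polyTranslation k J q = 0 := by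
  by_contra hne
  obtain ⟨r, hr⟩ := h
  have hq0 : q ≠ 0 := by rintro rfl; simp at hne
  have hr0 : r ≠ 0 := by rintro rfl; simp [hr] at hne
  have hlt := totalDegree_polyTranslation_lt hne
  rw [hr, MvPolynomial.totalDegree_mul_of_isDomain hq0 hr0] at hlt
  omega

lemma notMem_vars_of_pderiv_eq_zero [CharZero k] {i : Fin l} {p : MvPolynomial (Fin l) k}
    (h : MvPolynomial.pderiv i p = 0) : i ∉ p.vars := by
  intro hi
  obtain ⟨m, hm, him⟩ := (MvPolynomial.mem_vars_iff_mem_support i).1 hi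
  have hle : Finsupp.single i 1 ≤ m :=
    Finsupp.single_le_iff.2 (Nat.one_le_iff_ne_zero.2 (Finsupp.mem_support_iff.1 him))
  have hcoeff := MvPolynomial.coeff_pderiv (i := i) p (m - Finsupp.single i 1)
  rw [h, tsub_add_cancel_of_le hle, MvPolynomial.coeff_zero] at hcoeff
  exact mul_ne_zero (MvPolynomial.mem_support_iff.1 hm) (Nat.cast_add_one_ne_zero _) hcoeff.symm

lemma algebraMap_mem_varField {S : Finset (Fin l)} {p : MvPolynomial (Fin l) k}
    (h : ∀ i ∉ S, i ∉ p.vars) :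
    algebraMap (MvPolynomial (Fin l) k) (RF k l) p ∈ varField k S := by
  have hp : p ∈ MvPolynomial.supported k (S : Set (Fin l)) :=
    MvPolynomial.mem_supported.2 fun i hi => not_imp_not.1 (h i) hi
  rw [MvPolynomial.supported_eq_adjoin_X] at hp
  clear h
  induction hp using Algebra.adjoin_induction with
  | mem _ hx => obtain ⟨i, hi, rfl⟩ := hx; exact zv_mem_varField hi
  | algebraMap c =>
    rw [MvPolynomial.algebraMap_eq, algebraMap_C_eq]
    exact (varField k S).algebraMap_mem c
  | add x y _ _ hx hy => rw [map_add]; exact add_mem hx hy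
  | mul x y _ _ hx hy => rw [map_mul]; exact mul_mem hx hy

lemma exists_isRelPrime_eq_div (x : RF k l) : ∃ p q : MvPolynomial (Fin l) k, IsRelPrime p q ∧
    q ≠ 0 ∧ x = algebraMap _ (RF k l) p / algebraMap _ (RF k l) q := by
  obtain ⟨p, q, hpq, hx⟩ := IsFractionRing.exists_reduced_fraction (MvPolynomial (Fin l) k) x
  exact ⟨p, q, hpq, nonZeroDivisors.coe_ne_zero q, by rw [← hx, IsFractionRing.mk'_eq_div]⟩

variable {D : Fin l → Derivation k (RF k l) (RF k l)} (hD : IsPartialDeriv D)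
include hD

lemma wittField_zero_algebraMap (J : Finset (Fin l)) (p : MvPolynomial (Fin l) k) :
    wittField D 0 J (algebraMap (MvPolynomial (Fin l) k) (RF k l) p) =
      algebraMap (MvPolynomial (Fin l) k) (RF k l) (polyTranslation k J p) := by
  induction p using MvPolynomial.induction_on with
  | C c => simp [algebraMap_C_eq, ← MvPolynomial.algebraMap_eq]
  | add p q hp hq => simp only [map_add, hp, hq]
  | mul_X p i hp =>
    have hX : algebraMap (MvPolynomial (Fin l) k) (RF k l) (MvPolynomial.X i) = zv i := rfl
    rw [map_mul, Derivation.leibniz, hp, Derivation.leibniz, hX, wittField_zv hD,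
      polyTranslation_X]
    split_ifs <;> simp [hX]

/-- The denominator divides its own translation derivative, which has smaller degree. -/
lemma polyTranslation_eq_zero_of_isRelPrime {J : Finset (Fin l)} {p q : MvPolynomial (Fin l) k}
    (hpq : IsRelPrime p q) (hq0 : q ≠ 0)
    (h : wittField D 0 J (algebraMap _ (RF k l) p / algebraMap _ (RF k l) q) = 0) :
    polyTranslation k J p = 0 ∧ polyTranslation k J q = 0 := by
  have hq0' : algebraMap (MvPolynomial (Fin l) k) (RF k l) q ≠ 0 := by simpa using hq0
  have hderiv : p * polyTranslation k J q = q * polyTranslation k J p := by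
    have h' := congrArg (wittField D 0 J) (div_mul_cancel₀ (algebraMap _ (RF k l) p) hq0')
    rw [Derivation.leibniz, h, wittField_zero_algebraMap hD, wittField_zero_algebraMap hD,
      smul_zero, add_zero, smul_eq_mul, div_mul_eq_mul_div, div_eq_iff hq0'] at h'
    apply IsFractionRing.injective (MvPolynomial (Fin l) k) (RF k l)
    rw [map_mul, map_mul, h', mul_comm]
  have hq : polyTranslation k J q = 0 :=
    polyTranslation_eq_zero_of_dvd (hpq.symm.dvd_of_dvd_mul_left ⟨_, hderiv⟩)
  rw [hq, mul_zero] at hderiv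
  exact ⟨(mul_eq_zero.1 hderiv.symm).resolve_left hq0, hq⟩

lemma mem_varField_iff [CharZero k] {S : Finset (Fin l)} {x : RF k l} :
    x ∈ varField k S ↔ ∀ i ∉ S, D i x = 0 := by
  refine ⟨fun hx i hi => partialDeriv_eq_zero_of_notMem hD hi hx, fun h => ?_⟩
  obtain ⟨p, q, hpq, hq0, rfl⟩ := exists_isRelPrime_eq_div x
  have hpartial (i : Fin l) (hi : i ∉ S) :
      MvPolynomial.pderiv i p = 0 ∧ MvPolynomial.pderiv i q = 0 := by
    have h' := polyTranslation_eq_zero_of_isRelPrime hD (J := {i}) hpq hq0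
      (by simpa [wittField_apply] using h i hi)
    simpa [polyTranslation_apply] using h'
  exact div_mem
    (algebraMap_mem_varField fun i hi => notMem_vars_of_pderiv_eq_zero (hpartial i hi).1)
    (algebraMap_mem_varField fun i hi => notMem_vars_of_pderiv_eq_zero (hpartial i hi).2)

lemma mem_bot_of_partialDeriv_eq_zero [CharZero k] {x : RF k l}
    (h : ∀ i, D i x = 0) : x ∈ (⊥ : IntermediateField k (RF k l)) := by
  refine varField_le (S := ∅) (by simp) ((mem_varField_iff hD).2 fun i _ => h i)

end PolyTranslation

section LinearDisjoint

/-- If `x₀ b₀ + Σ xᵢ bᵢ = 0` is a relation with `x₀ ≠ 0`, normalise it to `x₀ = 1`: the derivations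
turn it into a shorter one, so all coefficients are constants by induction. -/
lemma linearIndependent_of_derivations {k L : Type} [Field k] [Field L] [Algebra k L]
    {A : IntermediateField k L} {ι κ : Type} (d : κ → Derivation k L L)
    (hA : ∀ j, ∀ x ∈ A, d j x ∈ A)
    (hconst : ∀ x ∈ A, (∀ j, d j x = 0) → x ∈ (⊥ : IntermediateField k L))
    {b : ι → L} (hdb : ∀ j i, d j (b i) = 0) (hb : LinearIndependent k b) :
    LinearIndependent A b := by
  refine linearIndependent_iff'.2 fun s => ?_
  induction s using Finset.induction_on with
  | empty => simp
  | insert a s ha ih =>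
    intro c hc
    suffices hca : c a = 0 by
      rw [Finset.sum_insert ha, hca, zero_smul, zero_add] at hc
      exact fun i hi => (Finset.mem_insert.1 hi).elim (fun h => h ▸ hca) (ih c hc i)
    by_contra hne
    have hrel : b a + ∑ i ∈ s, (c i / c a) • b i = 0 := by
      rw [← smul_right_injective L hne |>.eq_iff, smul_zero, ← hc, Finset.sum_insert ha, smul_add,
        Finset.smul_sum]
      simp only [smul_smul, mul_div_cancel₀ _ hne]
    have hderiv (j : κ) : ∀ i ∈ s, d j (c i / c a : A) = 0 := by
      have h := congrArg (d j) hrel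
      rw [map_add, hdb, zero_add, map_sum, map_zero] at h
      intro i hi
      refine congrArg Subtype.val
        (ih (fun i => ⟨d j (c i / c a : A), hA j _ (c i / c a).2⟩) ?_ i hi)
      refine (Finset.sum_congr rfl fun i _ => ?_).trans h
      rw [Algebra.smul_def (c i / c a), Derivation.leibniz, hdb, smul_zero, zero_add, smul_eq_mul,
        mul_comm]
      rfl
    have hbot (i : ι) : ∃ r : k, i ∈ s → algebraMap k L r = (c i / c a : A) := by
      by_cases hi : i ∈ s
      · obtain ⟨r, hr⟩ := hconst _ (c i / c a).2 fun j => hderiv j i hi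
        exact ⟨r, fun _ => hr⟩
      · exact ⟨0, fun h => absurd h hi⟩
    choose r hr using hbot
    have hkrel : ∑ i ∈ insert a s, (if i = a then 1 else r i) • b i = 0 := by
      rw [Finset.sum_insert ha, if_pos rfl, one_smul, ← hrel]
      congr 1
      refine Finset.sum_congr rfl fun i hi => ?_
      rw [if_neg (ne_of_mem_of_not_mem hi ha), Algebra.smul_def, hr i hi]
      rfl
    simpa using linearIndependent_iff'.1 hb _ _ hkrel a (Finset.mem_insert_self a s)

variable {k : Type} [Field k] {l : ℕ}

lemma varField_linearDisjoint [CharZero k] {D : Fin l → Derivation k (RF k l) (RF k l)}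
    (hD : IsPartialDeriv D) {I J : Finset (Fin l)} (hIJ : Disjoint I J) :
    (varField k I).LinearDisjoint (varField k J) := by
  let b := Module.Free.chooseBasis k (varField k J)
  refine .of_basis_right b (linearIndependent_of_derivations (fun i : I => D i)
    (fun i _ hx => partialDeriv_mem_varField hD i hx) ?_
    (fun i j => partialDeriv_eq_zero_of_notMem hD (Finset.disjoint_left.1 hIJ i.2) (b j).2)
    (b.linearIndependent.map' (varField k J).val.toLinearMap
      (LinearMap.ker_eq_bot.2 Subtype.val_injective)))
  intro x hx h
  refine mem_bot_of_partialDeriv_eq_zero hD fun i => ?_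
  by_cases hi : i ∈ I
  exacts [h ⟨i, hi⟩, partialDeriv_eq_zero_of_notMem hD hi hx]

lemma exists_finsuppSum_of_mem_mul {L : Type} [Field L] [Algebra k L] {U V : Submodule k L}
    {ι : Type} (b : Module.Basis ι k U) {x : L} (hx : x ∈ U * V) :
    ∃ f : ι →₀ V, x = f.sum fun i v => (b i : L) * v := by
  rw [← Submodule.mulMap_range] at hx
  obtain ⟨t, rfl⟩ := hx
  refine ⟨TensorProduct.equivFinsuppOfBasisLeft b t, ?_⟩
  conv_lhs => rw [← (TensorProduct.equivFinsuppOfBasisLeft b).symm_apply_apply t,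
    TensorProduct.equivFinsuppOfBasisLeft_symm_apply]
  simp [Finsupp.sum]

/-- Operators `T` that act on the second factor of `U * V` only, there as `T'`, are evaluated
coefficientwise in a basis of `U`. -/
lemma mem_mul_of_annihilated {L : Type} [Field L] [Algebra k L] {A B : IntermediateField k L}
    (hAB : A.LinearDisjoint B) {U V W : Submodule k L} (hU : ∀ u ∈ U, u ∈ A) {x : L}
    (hx : x ∈ U * V)
    (hW : ∀ v ∈ V, (∀ T T' : L →ₗ[k] L, (∀ u ∈ U, ∀ v ∈ V, T (u * v) = u * T' v) →
      (∀ v ∈ V, T' v ∈ B) → T x = 0 → T' v = 0) → v ∈ W) : x ∈ U * W := by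
  let b := Module.Free.chooseBasis k U
  obtain ⟨f, rfl⟩ := exists_finsuppSum_of_mem_mul b hx
  have hb : LinearIndependent k fun i => (⟨b i, hU _ (b i).2⟩ : A) :=
    .of_comp A.val.toLinearMap (b.linearIndependent.map' U.subtype U.ker_subtype)
  refine Submodule.sum_mem _ fun i hi =>
    Submodule.mul_mem_mul (b i).2 (hW _ (f i).2 fun T T' hT hT' h => ?_)
  have hrel : ∑ i ∈ f.support, (⟨T' (f i), hT' _ (f i).2⟩ : B) • (b i : L) = 0 := by
    rw [← h, Finsupp.sum, map_sum]
    refine Finset.sum_congr rfl fun i _ => ?_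
    rw [hT _ (b i).2 _ (f i).2, mul_comm]
    rfl
  exact congrArg Subtype.val
    (linearIndependent_iff'.1 (hAB.linearIndependent_left hb) f.support _ hrel i hi)

end LinearDisjoint

/-! ### Expansions of functions with poles along the diagonals -/

section PhiAlgebra

variable {k : Type} [Field k] {l : ℕ}

/-- The algebra `k[zᵢ, (zᵢ - z_j)⁻¹]`; its underlying set is `Φ`, see `mem_Phi_iff`. -/
def phiAlgebra (k : Type) [Field k] (l : ℕ) : Subalgebra k (RF k l) :=
  Algebra.adjoin k (Set.range zv ∪ {x | ∃ i j, x = (zv i - zv j)⁻¹})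

/-- The algebra `k[zᵢ, zᵢ⁻¹, (zᵢ - z_j)⁻¹]`, which contains the coefficients of the expansions of
functions in `Φ`. -/
def puncturedPhiAlgebra (k : Type) [Field k] (l : ℕ) : Subalgebra k (RF k l) :=
  Algebra.adjoin k (Set.range zv ∪ {x | ∃ i j, x = (zv i - zv j)⁻¹} ∪ {x | ∃ i, x = (zv i)⁻¹})

lemma zv_mem_phiAlgebra (i : Fin l) : zv i ∈ phiAlgebra k l :=
  Algebra.subset_adjoin (.inl ⟨i, rfl⟩)

lemma inv_sub_zv_mem_phiAlgebra (i j : Fin l) : (zv i - zv j)⁻¹ ∈ phiAlgebra k l :=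
  Algebra.subset_adjoin (.inr ⟨i, j, rfl⟩)

lemma phiAlgebra_le_puncturedPhiAlgebra : phiAlgebra k l ≤ puncturedPhiAlgebra k l :=
  Algebra.adjoin_mono Set.subset_union_left

lemma algebraMap_mem_phiAlgebra (p : MvPolynomial (Fin l) k) :
    algebraMap (MvPolynomial (Fin l) k) (RF k l) p ∈ phiAlgebra k l :=
  Algebra.adjoin_mono Set.subset_union_left (algebraMap_mem_adjoin_range_zv p)

/-- The Vandermonde product `∏_{i < j} (Xᵢ - X_j)`. -/
def vandermondeProd (k : Type) [Field k] (l : ℕ) : MvPolynomial (Fin l) k :=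
  ∏ i : Fin l, ∏ j : Fin l, if i < j then MvPolynomial.X i - MvPolynomial.X j else 1

lemma algebraMap_X_sub_X (i j : Fin l) :
    algebraMap (MvPolynomial (Fin l) k) (RF k l) (MvPolynomial.X i - MvPolynomial.X j) =
      zv i - zv j :=
  map_sub _ _ _

lemma X_sub_X_dvd_vandermondeProd {i j : Fin l} (h : i ≠ j) :
    (MvPolynomial.X i - MvPolynomial.X j : MvPolynomial (Fin l) k) ∣ vandermondeProd k l := by
  wlog hij : i < j generalizing i j
  · rw [← neg_sub, neg_dvd]
    exact this h.symm (h.lt_or_gt.resolve_left hij)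
  refine dvd_trans ?_ (Finset.dvd_prod_of_mem _ (Finset.mem_univ i))
  refine dvd_trans ?_ (Finset.dvd_prod_of_mem _ (Finset.mem_univ j))
  rw [if_pos hij]

lemma vandermondeProd_ne_zero : vandermondeProd k l ≠ 0 := by
  refine Finset.prod_ne_zero_iff.2 fun i _ => Finset.prod_ne_zero_iff.2 fun j _ => ?_
  split_ifs with h
  exacts [sub_ne_zero.2 (MvPolynomial.X_injective.ne h.ne), one_ne_zero]

lemma exists_mul_pow_eq_algebraMap_of_mem_adjoin {w : MvPolynomial (Fin l) k} {s : Set (RF k l)}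
    (hs : ∀ x ∈ s, ∃ p : MvPolynomial (Fin l) k,
      x * algebraMap (MvPolynomial (Fin l) k) (RF k l) w = algebraMap _ _ p)
    {x : RF k l} (hx : x ∈ Algebra.adjoin k s) : ∃ (N : ℕ) (p : MvPolynomial (Fin l) k),
      x * algebraMap (MvPolynomial (Fin l) k) (RF k l) w ^ N = algebraMap _ _ p := by
  induction hx using Algebra.adjoin_induction with
  | mem x hx =>
    obtain ⟨p, hp⟩ := hs x hx
    exact ⟨1, p, by rw [pow_one, hp]⟩
  | algebraMap c => exact ⟨0, MvPolynomial.C c, by rw [algebraMap_C_eq, pow_zero, mul_one]⟩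
  | add x y _ _ hx hy =>
    obtain ⟨⟨N, p, hp⟩, M, q, hq⟩ := And.intro hx hy
    refine ⟨N + M, p * w ^ M + q * w ^ N, ?_⟩
    rw [map_add, map_mul, map_mul, map_pow, map_pow, ← hp, ← hq]
    ring
  | mul x y _ _ hx hy =>
    obtain ⟨⟨N, p, hp⟩, M, q, hq⟩ := And.intro hx hy
    refine ⟨N + M, p * q, ?_⟩
    rw [map_mul, ← hp, ← hq]
    ring

lemma exists_inv_mul_eq_algebraMap_of_dvd {f w : MvPolynomial (Fin l) k} (h : f ∣ w) :
    ∃ p : MvPolynomial (Fin l) k,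
      (algebraMap (MvPolynomial (Fin l) k) (RF k l) f)⁻¹ * algebraMap _ _ w =
        algebraMap _ _ p := by
  obtain ⟨r, rfl⟩ := h
  by_cases hf : algebraMap (MvPolynomial (Fin l) k) (RF k l) f = 0
  · exact ⟨0, by rw [hf, inv_zero, zero_mul, map_zero]⟩
  · exact ⟨r, by rw [map_mul, inv_mul_cancel_left₀ hf]⟩

lemma exists_mul_eq_algebraMap_of_vandermondeProd_dvd {w : MvPolynomial (Fin l) k}
    (h : vandermondeProd k l ∣ w) {x : RF k l}
    (hx : x ∈ Set.range zv ∪ {x | ∃ i j, x = (zv i - zv j)⁻¹}) :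
    ∃ p : MvPolynomial (Fin l) k,
      x * algebraMap (MvPolynomial (Fin l) k) (RF k l) w = algebraMap _ _ p := by
  obtain ⟨i, rfl⟩ | ⟨i, j, rfl⟩ := hx
  · exact ⟨MvPolynomial.X i * w, (map_mul _ _ _).symm⟩
  obtain rfl | hij := eq_or_ne i j
  · exact ⟨0, by simp⟩
  rw [← algebraMap_X_sub_X]
  exact exists_inv_mul_eq_algebraMap_of_dvd ((X_sub_X_dvd_vandermondeProd hij).trans h)

lemma exists_mul_vandermondeProd_pow_eq_algebraMap {x : RF k l} (hx : x ∈ phiAlgebra k l) :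
    ∃ (N : ℕ) (p : MvPolynomial (Fin l) k),
      x * algebraMap (MvPolynomial (Fin l) k) (RF k l) (vandermondeProd k l) ^ N =
        algebraMap _ _ p :=
  exists_mul_pow_eq_algebraMap_of_mem_adjoin
    (fun _ => exists_mul_eq_algebraMap_of_vandermondeProd_dvd dvd_rfl) hx

lemma algebraMap_vandermondeProd : algebraMap (MvPolynomial (Fin l) k) (RF k l)
    (vandermondeProd k l) = ∏ i : Fin l, ∏ j : Fin l, if i < j then zv i - zv j else 1 := by
  simp only [vandermondeProd, map_prod, apply_ite, algebraMap_X_sub_X, map_one]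

lemma mem_Phi_of_mul_vandermondeProd_pow_eq {x : RF k l} {N : ℕ} {p : MvPolynomial (Fin l) k}
    (h : x * algebraMap (MvPolynomial (Fin l) k) (RF k l) (vandermondeProd k l) ^ N =
      algebraMap _ _ p) : x ∈ Phi k l := by
  have hprod : (∏ i : Fin l, ∏ j : Fin l,
      if i < j then (zv i - zv j : RF k l) ^ (-(N : ℤ)) else 1) =
        (algebraMap (MvPolynomial (Fin l) k) (RF k l) (vandermondeProd k l) ^ N)⁻¹ := by
    simp only [algebraMap_vandermondeProd, ← Finset.prod_pow, ← Finset.prod_inv_distrib,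
      apply_ite (· ^ N), apply_ite (·⁻¹), one_pow, inv_one, zpow_neg, zpow_natCast]
  refine ⟨p, fun _ _ => -(N : ℤ), ?_⟩
  rw [hprod, ← h, mul_inv_cancel_right₀]
  simpa using pow_ne_zero N (vandermondeProd_ne_zero (k := k) (l := l))

lemma mem_Phi_iff {x : RF k l} : x ∈ Phi k l ↔ x ∈ phiAlgebra k l := by
  constructor
  · rintro ⟨p, e, rfl⟩
    refine mul_mem (algebraMap_mem_phiAlgebra p) (prod_mem fun i _ => prod_mem fun j _ => ?_)
    split_ifs
    · cases e i j with
      | ofNat n =>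
        rw [Int.ofNat_eq_natCast, zpow_natCast]
        exact pow_mem (sub_mem (zv_mem_phiAlgebra i) (zv_mem_phiAlgebra j)) n
      | negSucc n =>
        rw [zpow_negSucc, ← inv_pow]
        exact pow_mem (inv_sub_zv_mem_phiAlgebra i j) _
    · exact one_mem _
  · intro hx
    obtain ⟨N, p, hp⟩ := exists_mul_vandermondeProd_pow_eq_algebraMap hx
    exact mem_Phi_of_mul_vandermondeProd_pow_eq hp

lemma expansion_inv_sub_zv_of_mem {J : Finset (Fin l)} {i j : Fin l} (hi : i ∈ J) (hj : j ∈ J) :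
    expansion J (zv i - zv j : RF k l)⁻¹ = HahnSeries.single (-1) (zv i - zv j)⁻¹ := by
  rw [map_inv₀, map_sub, expansion_zv_of_mem hi, expansion_zv_of_mem hj, ← HahnSeries.single_sub,
    HahnSeries.inv_single]

lemma disjoint_pair_of_notMem {J : Finset (Fin l)} {i j : Fin l} (hi : i ∉ J) (hj : j ∉ J) :
    Disjoint J {i, j} := by
  simp [hi, hj]

lemma inv_sub_zv_mem_varField {S : Finset (Fin l)} {i j : Fin l} (hi : i ∈ S) (hj : j ∈ S) :
    (zv i - zv j : RF k l)⁻¹ ∈ varField k S :=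
  inv_mem (sub_mem (zv_mem_varField hi) (zv_mem_varField hj))

lemma expansion_zv_pow_mul_inv_pow (J : Finset (Fin l)) (i j : Fin l) (a b : ℕ) :
    expansion J (zv j ^ a * (zv i)⁻¹ ^ b : RF k l) =
      HahnSeries.single ((if j ∈ J then (a : ℤ) else 0) - if i ∈ J then (b : ℤ) else 0)
        (zv j ^ a * (zv i)⁻¹ ^ b) := by
  rw [map_mul, map_pow, map_pow, map_inv₀, expansion_zv, expansion_zv, HahnSeries.inv_single,
    HahnSeries.single_pow, HahnSeries.single_pow, HahnSeries.single_mul_single]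
  congr 1
  split_ifs <;> simp [sub_eq_add_neg]

lemma expansion_inv_one_sub {J : Finset (Fin l)} {v : RF k l}
    (hv : expansion J v = HahnSeries.single 1 v) : expansion J (1 - v)⁻¹ =
      HahnSeries.ofPowerSeries ℤ (RF k l) (PowerSeries.rescale v (PowerSeries.mk 1)) := by
  let φ := (HahnSeries.ofPowerSeries ℤ (RF k l)).comp (PowerSeries.rescale v)
  have h := congrArg φ (PowerSeries.mk_one_mul_one_sub_eq_one (RF k l))
  rw [map_mul, map_sub, map_one, RingHom.comp_apply, RingHom.comp_apply, PowerSeries.rescale_X,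
    map_mul, HahnSeries.ofPowerSeries_C, HahnSeries.ofPowerSeries_X, HahnSeries.C_apply,
    HahnSeries.single_mul_single, zero_add, mul_one, ← hv, ← map_one (expansion J), ← map_sub] at h
  rw [map_inv₀]
  exact (eq_inv_of_mul_eq_one_left (h.trans (map_one _))).symm

lemma coeff_expansion_inv_one_sub {J : Finset (Fin l)} {v : RF k l}
    (hv : expansion J v = HahnSeries.single 1 v) (n : ℤ) :
    (expansion J (1 - v)⁻¹).coeff n = if n < 0 then 0 else v ^ n.natAbs := by
  rw [expansion_inv_one_sub hv, PowerSeries.coeff_coe, PowerSeries.coeff_rescale,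
    PowerSeries.coeff_mk, Pi.one_apply, mul_one]

/-- The geometric series `(zᵢ - z_j)⁻¹ = Σ_{n ≥ 0} z_jⁿ zᵢ^{-n-1}` for `z_j` small. -/
lemma coeff_expansion_inv_sub_zv {J : Finset (Fin l)} {i j : Fin l} (hi : i ∉ J) (hj : j ∈ J)
    (n : ℤ) : (expansion J (zv i - zv j : RF k l)⁻¹).coeff n =
      if n < 0 then 0 else zv j ^ n.natAbs * (zv i)⁻¹ ^ (n.natAbs + 1) := by
  have hv : expansion J (zv j * (zv i)⁻¹ : RF k l) = HahnSeries.single 1 (zv j * (zv i)⁻¹) := by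
    simpa [hi, hj] using expansion_zv_pow_mul_inv_pow (k := k) J i j 1 1
  have hsub : (zv i - zv j : RF k l) = zv i * (1 - zv j * (zv i)⁻¹) := by
    have := zv_ne_zero (k := k) i
    field_simp
  rw [hsub, mul_inv, map_mul, map_inv₀ _ (zv i), expansion_zv_of_notMem hi, ← map_inv₀,
    HahnSeries.C_mul_eq_smul, HahnSeries.coeff_smul, coeff_expansion_inv_one_sub hv, smul_ite,
    smul_zero, smul_eq_mul, mul_pow, pow_succ']
  split_ifs
  · rfl
  · ring

lemma mem_commutingSubring_of_disjoint {J K S : Finset (Fin l)} (h : Disjoint J S) {x : RF k l}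
    (hx : x ∈ varField k S) : x ∈ commutingSubring (expansion J) (expansion K) := by
  intro n m
  rw [expansion_eq_C h hx, expansion_eq_C h (coeff_expansion_mem_varField hx m), HahnSeries.C_apply,
    HahnSeries.C_apply, HahnSeries.coeff_single, HahnSeries.coeff_single]
  split_ifs <;> simp

lemma inv_sub_zv_mem_commutingSubring_of_notMem {J K : Finset (Fin l)} (hJK : J ⊆ K) {i j : Fin l}
    (hi : i ∉ J) (hj : j ∈ J) :
    (zv i - zv j : RF k l)⁻¹ ∈ commutingSubring (expansion J) (expansion K) := by
  intro n m
  by_cases hiK : i ∈ K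
  · rw [expansion_inv_sub_zv_of_mem hiK (hJK hj), HahnSeries.coeff_single,
      coeff_expansion_inv_sub_zv hi hj, apply_ite (expansion J), map_zero,
      apply_ite (HahnSeries.coeff · n), coeff_expansion_inv_sub_zv hi hj]
    split_ifs with hm hn hn
    · simp
    · rw [expansion_zv_pow_mul_inv_pow, if_pos (hJK hj), if_pos hiK, HahnSeries.coeff_single,
        if_pos (by lia)]
    · simp
    · rw [expansion_zv_pow_mul_inv_pow, if_pos (hJK hj), if_pos hiK, HahnSeries.coeff_single,
        if_neg (by lia), HahnSeries.coeff_zero]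
  · rw [coeff_expansion_inv_sub_zv hi hj, coeff_expansion_inv_sub_zv hiK (hJK hj)]
    split_ifs with hm hn hn
    · simp
    · rw [expansion_zv_pow_mul_inv_pow, if_pos (hJK hj), if_neg hiK, HahnSeries.coeff_single,
        if_neg (by lia), map_zero, HahnSeries.coeff_zero]
    · rw [expansion_zv_pow_mul_inv_pow, if_pos hj, if_neg hi, HahnSeries.coeff_single,
        if_neg (by lia), map_zero, HahnSeries.coeff_zero]
    · rw [expansion_zv_pow_mul_inv_pow, expansion_zv_pow_mul_inv_pow, if_pos hj, if_neg hi,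
        if_pos (hJK hj), if_neg hiK, HahnSeries.coeff_single, HahnSeries.coeff_single]
      obtain rfl | hnm := eq_or_ne n m
      · rfl
      · rw [if_neg (by lia), if_neg (by lia)]

lemma inv_sub_zv_mem_commutingSubring {J K : Finset (Fin l)} (hJK : J ⊆ K) (i j : Fin l) :
    (zv i - zv j : RF k l)⁻¹ ∈ commutingSubring (expansion J) (expansion K) := by
  by_cases hi : i ∈ J <;> by_cases hj : j ∈ J
  · exact mem_commutingSubring_of_eq_single (expansion_inv_sub_zv_of_mem hi hj)
      (expansion_inv_sub_zv_of_mem (hJK hi) (hJK hj))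
  · rw [← neg_sub, inv_neg]
    exact neg_mem (inv_sub_zv_mem_commutingSubring_of_notMem hJK hj hi)
  · exact inv_sub_zv_mem_commutingSubring_of_notMem hJK hi hj
  · exact mem_commutingSubring_of_disjoint (disjoint_pair_of_notMem hi hj)
      (inv_sub_zv_mem_varField (by simp) (by simp))

lemma mem_commutingSubring_of_mem_phiAlgebra {J K : Finset (Fin l)} (hJK : J ⊆ K) {x : RF k l}
    (hx : x ∈ phiAlgebra k l) : x ∈ commutingSubring (expansion J) (expansion K) := by
  induction hx using Algebra.adjoin_induction with
  | mem x hx =>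
    obtain ⟨i, rfl⟩ | ⟨i, j, rfl⟩ := hx
    · exact mem_commutingSubring_of_eq_single (expansion_zv J i) (expansion_zv K i)
    · exact inv_sub_zv_mem_commutingSubring hJK i j
  | algebraMap c =>
    exact mem_commutingSubring_of_disjoint (Finset.disjoint_empty_right J) (algebraMap_mem _ c)
  | add x y _ _ hx hy => exact add_mem hx hy
  | mul x y _ _ hx hy => exact mul_mem hx hy

lemma inv_zv_mem_puncturedPhiAlgebra (i : Fin l) : (zv i)⁻¹ ∈ puncturedPhiAlgebra k l :=
  Algebra.subset_adjoin (.inr ⟨i, rfl⟩)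

/-- The algebra spanned by the products `u * v` with `u ∈ k[zᵢ, zᵢ⁻¹, (zᵢ - z_j)⁻¹]` a function of
the variables outside `J` and `v ∈ Φ` a function of the variables in `J`. -/
def splitAlgebra (k : Type) [Field k] {l : ℕ} (J : Finset (Fin l)) : Subalgebra k (RF k l) :=
  (puncturedPhiAlgebra k l ⊓ (varField k Jᶜ).toSubalgebra) ⊔
    (phiAlgebra k l ⊓ (varField k J).toSubalgebra)

lemma mem_splitAlgebra_iff {J : Finset (Fin l)} {x : RF k l} : x ∈ splitAlgebra k J ↔
    x ∈ (puncturedPhiAlgebra k l ⊓ (varField k Jᶜ).toSubalgebra).toSubmodule *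
      (phiAlgebra k l ⊓ (varField k J).toSubalgebra).toSubmodule := by
  rw [Subalgebra.mul_toSubmodule]; rfl

section SplitAlgebra

variable {J : Finset (Fin l)} {x : RF k l}

lemma mem_splitAlgebra_of_mem_compl (hx : x ∈ puncturedPhiAlgebra k l) (hx' : x ∈ varField k Jᶜ) :
    x ∈ splitAlgebra k J :=
  Algebra.mem_sup_left (Algebra.mem_inf.2 ⟨hx, hx'⟩)

lemma mem_splitAlgebra_of_mem (hx : x ∈ phiAlgebra k l) (hx' : x ∈ varField k J) :
    x ∈ splitAlgebra k J :=
  Algebra.mem_sup_right (Algebra.mem_inf.2 ⟨hx, hx'⟩)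

lemma coeff_single_mem_splitAlgebra (hx : x ∈ splitAlgebra k J) (a n : ℤ) :
    (HahnSeries.single a x).coeff n ∈ splitAlgebra k J := by
  rw [HahnSeries.coeff_single]
  split_ifs
  exacts [hx, zero_mem _]

lemma coeff_expansion_zv_mem_splitAlgebra (i : Fin l) (n : ℤ) :
    (expansion J (zv i)).coeff n ∈ splitAlgebra k J := by
  rw [expansion_zv]
  refine coeff_single_mem_splitAlgebra ?_ _ n
  by_cases hi : i ∈ J
  · exact mem_splitAlgebra_of_mem (zv_mem_phiAlgebra i) (zv_mem_varField hi)
  · exact mem_splitAlgebra_of_mem_compl (phiAlgebra_le_puncturedPhiAlgebra (zv_mem_phiAlgebra i))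
      (zv_mem_varField (Finset.mem_compl.2 hi))

lemma coeff_expansion_inv_sub_zv_mem_splitAlgebra_of_notMem {i j : Fin l} (hi : i ∉ J)
    (hj : j ∈ J) (n : ℤ) : (expansion J (zv i - zv j : RF k l)⁻¹).coeff n ∈ splitAlgebra k J := by
  rw [coeff_expansion_inv_sub_zv hi hj]
  split_ifs
  · exact zero_mem _
  · refine mul_mem (pow_mem ?_ _) (pow_mem ?_ _)
    · exact mem_splitAlgebra_of_mem (zv_mem_phiAlgebra j) (zv_mem_varField hj)
    · exact mem_splitAlgebra_of_mem_compl (inv_zv_mem_puncturedPhiAlgebra i)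
        (inv_mem (zv_mem_varField (Finset.mem_compl.2 hi)))

lemma coeff_expansion_inv_sub_zv_mem_splitAlgebra (i j : Fin l) (n : ℤ) :
    (expansion J (zv i - zv j : RF k l)⁻¹).coeff n ∈ splitAlgebra k J := by
  by_cases hi : i ∈ J <;> by_cases hj : j ∈ J
  · rw [expansion_inv_sub_zv_of_mem hi hj]
    exact coeff_single_mem_splitAlgebra (mem_splitAlgebra_of_mem (inv_sub_zv_mem_phiAlgebra i j)
      (inv_sub_zv_mem_varField hi hj)) _ n
  · rw [← neg_sub, inv_neg, map_neg, HahnSeries.coeff_neg]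
    exact neg_mem (coeff_expansion_inv_sub_zv_mem_splitAlgebra_of_notMem hj hi n)
  · exact coeff_expansion_inv_sub_zv_mem_splitAlgebra_of_notMem hi hj n
  · have hmem : (zv i - zv j : RF k l)⁻¹ ∈ varField k Jᶜ :=
      inv_sub_zv_mem_varField (Finset.mem_compl.2 hi) (Finset.mem_compl.2 hj)
    rw [expansion_eq_C disjoint_compl_right hmem]
    exact coeff_single_mem_splitAlgebra (mem_splitAlgebra_of_mem_compl
      (phiAlgebra_le_puncturedPhiAlgebra (inv_sub_zv_mem_phiAlgebra i j)) hmem) _ n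

lemma coeff_expansion_mem_splitAlgebra (hx : x ∈ phiAlgebra k l) (n : ℤ) :
    (expansion J x).coeff n ∈ splitAlgebra k J := by
  induction hx using Algebra.adjoin_induction generalizing n with
  | mem x hx =>
    obtain ⟨i, rfl⟩ | ⟨i, j, rfl⟩ := hx
    · exact coeff_expansion_zv_mem_splitAlgebra i n
    · exact coeff_expansion_inv_sub_zv_mem_splitAlgebra i j n
  | algebraMap c =>
    rw [expansion_const]
    exact coeff_single_mem_splitAlgebra (algebraMap_mem _ c) 0 n
  | add x y _ _ hx hy =>
    rw [map_add, HahnSeries.coeff_add]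
    exact add_mem (hx n) (hy n)
  | mul x y _ _ hx hy =>
    obtain ⟨a, ha⟩ := exists_forall_lt_coeff_eq_zero (expansion J x)
    obtain ⟨b, hb⟩ := exists_forall_lt_coeff_eq_zero (expansion J y)
    rw [map_mul, coeff_mul_eq_sum_Icc ha hb]
    exact sum_mem fun i _ => mul_mem (hx i) (hy _)

end SplitAlgebra

end PhiAlgebra

/-! ### Translations -/

section Translation

variable {k : Type} [Field k] {l : ℕ}

/-- The substitution `zᵢ ↦ zᵢ + c` for `i ∈ J` in polynomials. -/
def translatePoly {k : Type} [Field k] {l : ℕ} (J : Finset (Fin l)) (c : k) :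
    MvPolynomial (Fin l) k →ₐ[k] MvPolynomial (Fin l) k :=
  MvPolynomial.aeval fun i =>
    if i ∈ J then MvPolynomial.X i + MvPolynomial.C c else MvPolynomial.X i

lemma translatePoly_X (J : Finset (Fin l)) (c : k) (i : Fin l) :
    translatePoly J c (MvPolynomial.X i) =
      if i ∈ J then MvPolynomial.X i + MvPolynomial.C c else MvPolynomial.X i :=
  MvPolynomial.aeval_X _ _

lemma translatePoly_injective (J : Finset (Fin l)) (c : k) :
    Function.Injective (translatePoly J c) := by
  have h : (translatePoly J (-c)).comp (translatePoly J c) = AlgHom.id k _ := by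
    ext i : 1
    rw [AlgHom.comp_apply, translatePoly_X]
    split_ifs with hi
    · rw [map_add, translatePoly_X, if_pos hi, ← MvPolynomial.algebraMap_eq, AlgHom.commutes,
        map_neg, neg_add_cancel_right, AlgHom.id_apply]
    · rw [translatePoly_X, if_neg hi, AlgHom.id_apply]
  exact Function.LeftInverse.injective (g := translatePoly J (-c)) (DFunLike.congr_fun h)

/-- The substitution `zᵢ ↦ zᵢ + T` for `i ∈ J` with an indeterminate `T`. -/
def genericTranslatePoly (k : Type) [Field k] {l : ℕ} (J : Finset (Fin l)) :
    MvPolynomial (Fin l) k →ₐ[k] Polynomial (MvPolynomial (Fin l) k) :=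
  MvPolynomial.aeval fun i =>
    Polynomial.C (MvPolynomial.X i) + if i ∈ J then Polynomial.X else 0

lemma genericTranslatePoly_X (J : Finset (Fin l)) (i : Fin l) :
    genericTranslatePoly k J (MvPolynomial.X i) =
      Polynomial.C (MvPolynomial.X i) + if i ∈ J then Polynomial.X else 0 :=
  MvPolynomial.aeval_X _ _

lemma eval_genericTranslatePoly (J : Finset (Fin l)) (c : k) (p : MvPolynomial (Fin l) k) :
    (genericTranslatePoly k J p).eval (MvPolynomial.C c) = translatePoly J c p := by
  let ev : Polynomial (MvPolynomial (Fin l) k) →ₐ[k] MvPolynomial (Fin l) k :=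
    (Polynomial.aeval (MvPolynomial.C c : MvPolynomial (Fin l) k)).restrictScalars k
  have h : ev.comp (genericTranslatePoly k J) = translatePoly J c := by
    ext i : 1
    rw [AlgHom.comp_apply, genericTranslatePoly_X, translatePoly_X]
    split_ifs <;> simp [ev]
  exact DFunLike.congr_fun h p

lemma derivative_genericTranslatePoly (J : Finset (Fin l)) (p : MvPolynomial (Fin l) k) :
    Polynomial.derivative (genericTranslatePoly k J p) =
      genericTranslatePoly k J (polyTranslation k J p) := by
  induction p using MvPolynomial.induction_on with
  | C c =>
    rw [← MvPolynomial.algebraMap_eq, AlgHom.commutes, Derivation.map_algebraMap, map_zero]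
    exact Polynomial.derivative_C
  | add p q hp hq => simp only [map_add, hp, hq]
  | mul_X p i hp =>
    rw [map_mul, Polynomial.derivative_mul, hp, Derivation.leibniz, genericTranslatePoly_X,
      polyTranslation_X]
    split_ifs <;> simp [genericTranslatePoly_X, *] <;> ring

lemma translatePoly_eq_self [CharZero k] {J : Finset (Fin l)} {p : MvPolynomial (Fin l) k}
    (h : polyTranslation k J p = 0) (c : k) : translatePoly J c p = p := by
  have hconst (d : k) : (genericTranslatePoly k J p).eval (MvPolynomial.C d) =
      (genericTranslatePoly k J p).coeff 0 := by
    have hdeg : (genericTranslatePoly k J p).natDegree = 0 := by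
      rw [← Polynomial.derivative_eq_zero, derivative_genericTranslatePoly, h, map_zero]
    rw [Polynomial.eq_C_of_natDegree_eq_zero hdeg, Polynomial.eval_C, Polynomial.coeff_C_zero]
  have hzero : translatePoly J 0 = AlgHom.id k (MvPolynomial (Fin l) k) := by
    ext i : 1
    simp [translatePoly_X]
  rw [← eval_genericTranslatePoly, hconst c, ← hconst 0, eval_genericTranslatePoly, hzero,
    AlgHom.id_apply]

lemma algHom_comp_translatePoly_injective (J : Finset (Fin l)) (c : k) :
    Function.Injective
      ((Algebra.algHom k (MvPolynomial (Fin l) k) (RF k l)).comp (translatePoly J c)) :=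
  fun _ _ h => translatePoly_injective J c (IsFractionRing.injective _ (RF k l) h)

/-- The substitution `zᵢ ↦ zᵢ + c` for `i ∈ J` in rational functions. -/
def translate {k : Type} [Field k] {l : ℕ} (J : Finset (Fin l)) (c : k) : RF k l →ₐ[k] RF k l :=
  IsFractionRing.liftAlgHom (algHom_comp_translatePoly_injective J c)

lemma translate_algebraMap (J : Finset (Fin l)) (c : k) (p : MvPolynomial (Fin l) k) :
    translate J c (algebraMap (MvPolynomial (Fin l) k) (RF k l) p) =
      algebraMap (MvPolynomial (Fin l) k) (RF k l) (translatePoly J c p) := by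
  rw [translate, IsFractionRing.liftAlgHom_apply, IsFractionRing.lift_algebraMap]
  rfl

lemma translate_zv (J : Finset (Fin l)) (c : k) (i : Fin l) :
    translate J c (zv i) = if i ∈ J then zv i + algebraMap k (RF k l) c else zv i := by
  rw [zv, translate_algebraMap, translatePoly_X]
  split_ifs
  · rw [map_add, algebraMap_C_eq]
  · rfl

lemma expansion_translate {I J : Finset (Fin l)} (h : Disjoint I J) (c : k) (x : RF k l) :
    expansion J (translate I c x) = laurentMap (translate I c).toRingHom (expansion J x) := by
  refine ringHom_eqOn_varField (φ := (expansion J).comp (translate I c).toRingHom)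
    (ψ := (laurentMap (translate I c).toRingHom).comp (expansion J)) (fun d => ?_) (fun i _ => ?_)
    (mem_varField_univ x)
  · simp
  · by_cases hi : i ∈ I
    · simp [translate_zv, hi, expansion_zv_of_notMem (Finset.disjoint_left.1 h hi)]
    · simp [translate_zv, hi, expansion_zv]

lemma translate_translate_of_disjoint {I J : Finset (Fin l)} (h : Disjoint I J) (c : k)
    (x : RF k l) : translate I c (translate J c x) = translate (I ∪ J) c x := by
  refine ringHom_eqOn_varField (φ := (translate I c).toRingHom.comp (translate J c).toRingHom)
    (ψ := (translate (I ∪ J) c).toRingHom) (fun d => ?_) (fun i _ => ?_) (mem_varField_univ x)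
  · simp
  · by_cases hi : i ∈ I
    · simp [translate_zv, hi, Finset.disjoint_left.1 h hi]
    · by_cases hj : i ∈ J <;> simp [translate_zv, hi, hj]

lemma translate_eq_self [CharZero k] {D : Fin l → Derivation k (RF k l) (RF k l)}
    (hD : IsPartialDeriv D) {J : Finset (Fin l)} {x : RF k l} (h : wittField D 0 J x = 0) (c : k) :
    translate J c x = x := by
  obtain ⟨p, q, hpq, hq0, rfl⟩ := exists_isRelPrime_eq_div x
  obtain ⟨hp, hq⟩ := polyTranslation_eq_zero_of_isRelPrime hD hpq hq0 h
  rw [map_div₀, translate_algebraMap, translate_algebraMap, translatePoly_eq_self hp,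
    translatePoly_eq_self hq]

end Translation

/-! ### Admissible functions -/

section Admissible

variable {k : Type} [Field k] {l : ℕ}

/-- The coefficient of `tⁿ` in `expansion J x`, as a linear map. -/
def expansionCoeff {k : Type} [Field k] {l : ℕ} (J : Finset (Fin l)) (n : ℤ) :
    RF k l →ₗ[k] RF k l where
  toFun x := (expansion J x).coeff n
  map_add' x y := by rw [map_add, HahnSeries.coeff_add]
  map_smul' c x := by
    rw [expansion_smul, HahnSeries.C_mul_eq_smul, HahnSeries.coeff_smul, smul_eq_mul,
      RingHom.id_apply, Algebra.smul_def]

@[simp]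
lemma expansionCoeff_apply (J : Finset (Fin l)) (n : ℤ) (x : RF k l) :
    expansionCoeff J n x = (expansion J x).coeff n :=
  rfl

/-- The component `(x)₀` with respect to weights `2`, for small variables indexed by `J`. -/
def leadingComponent {k : Type} [Field k] {l : ℕ} (J : Finset (Fin l)) : RF k l →ₗ[k] RF k l :=
  expansionCoeff J (-2 * J.card)

lemma leadingComponent_apply (J : Finset (Fin l)) (x : RF k l) :
    leadingComponent J x = (expansion J x).coeff (-2 * J.card) :=
  rfl

/-- The operator `Δ*(4,…,4) = Σ_{i ∈ S} (zᵢ² ∂ᵢ + 4 zᵢ)` in the variables of `S`. -/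
def deltaStarOn (D : Fin l → Derivation k (RF k l) (RF k l)) (S : Finset (Fin l)) :
    RF k l →ₗ[k] RF k l :=
  (wittField D 2 S).toLinearMap + LinearMap.mulLeft k (4 * ∑ i ∈ S, zv i)

variable {D : Fin l → Derivation k (RF k l) (RF k l)}

lemma deltaStarOn_apply (S : Finset (Fin l)) (x : RF k l) :
    deltaStarOn D S x = wittField D 2 S x + 4 * (∑ i ∈ S, zv i) * x :=
  rfl

lemma deltaStarOn_eq_sum (S : Finset (Fin l)) (x : RF k l) :
    deltaStarOn D S x = ∑ i ∈ S, (zv i ^ 2 * D i x + 4 * zv i * x) := by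
  rw [deltaStarOn_apply, wittField_apply, Finset.sum_add_distrib, ← Finset.sum_mul,
    ← Finset.mul_sum]

section Coefficients

variable (hD : IsPartialDeriv D)
include hD

lemma wittField_eq_of_subset {S T : Finset (Fin l)} (hST : S ⊆ T) {x : RF k l}
    (hx : x ∈ varField k S) (e : ℕ) : wittField D e T x = wittField D e S x := by
  rw [wittField_apply, wittField_apply]
  refine (Finset.sum_subset hST fun i _ hi => ?_).symm
  rw [partialDeriv_eq_zero_of_notMem hD hi hx, mul_zero]

lemma wittField_mem_varField {S T : Finset (Fin l)} (hTS : T ⊆ S) {x : RF k l}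
    (hx : x ∈ varField k S) (e : ℕ) : wittField D e T x ∈ varField k S := by
  rw [wittField_apply]
  exact sum_mem fun i hi =>
    mul_mem (pow_mem (zv_mem_varField (hTS hi)) e) (partialDeriv_mem_varField hD i hx)

lemma deltaStarOn_mem_varField {S T : Finset (Fin l)} (hTS : T ⊆ S) {x : RF k l}
    (hx : x ∈ varField k S) : deltaStarOn D T x ∈ varField k S := by
  rw [deltaStarOn_apply]
  exact add_mem (wittField_mem_varField hD hTS hx 2) (mul_mem
    (mul_mem (ofNat_mem _ 4) (sum_mem fun i hi => zv_mem_varField (hTS hi))) hx)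

lemma partialDeriv_mul_of_notMem {S : Finset (Fin l)} {i : Fin l} (hi : i ∉ S) {u : RF k l}
    (hu : u ∈ varField k S) (v : RF k l) : D i (u * v) = u * D i v := by
  rw [Derivation.leibniz, partialDeriv_eq_zero_of_notMem hD hi hu, smul_zero, add_zero,
    smul_eq_mul]

lemma wittField_mul_of_disjoint {S T : Finset (Fin l)} (h : Disjoint S T) {u : RF k l}
    (hu : u ∈ varField k T) (e : ℕ) (v : RF k l) :
    wittField D e S (u * v) = u * wittField D e S v := by
  rw [wittField_apply, wittField_apply, Finset.mul_sum]
  exact Finset.sum_congr rfl fun i hi => by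
    rw [partialDeriv_mul_of_notMem hD (Finset.disjoint_left.1 h hi) hu, mul_left_comm]

lemma deltaStarOn_mul_of_disjoint {S T : Finset (Fin l)} (h : Disjoint S T) {u : RF k l}
    (hu : u ∈ varField k T) (v : RF k l) : deltaStarOn D S (u * v) = u * deltaStarOn D S v := by
  rw [deltaStarOn_apply, deltaStarOn_apply, wittField_mul_of_disjoint hD h hu]
  ring

lemma coeff_expansion_deltaStarOn (J S : Finset (Fin l)) (x : RF k l) (n : ℤ) :
    (expansion J (deltaStarOn D S x)).coeff n =
      deltaStarOn D (S ∩ J) ((expansion J x).coeff (n - 1)) +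
        deltaStarOn D (S \ J) ((expansion J x).coeff n) := by
  have hσ : expansion J (4 * ∑ i ∈ S, zv i : RF k l) =
      HahnSeries.single 1 (4 * ∑ i ∈ S ∩ J, zv i) + HahnSeries.C (4 * ∑ i ∈ S \ J, zv i) := by
    have hσJ : expansion J (∑ i ∈ S ∩ J, zv i : RF k l) =
        HahnSeries.single 1 (∑ i ∈ S ∩ J, zv i) := by
      rw [map_sum, Finset.sum_congr rfl fun i hi => expansion_zv_of_mem (Finset.mem_inter.1 hi).2]
      exact (map_sum (HahnSeries.single.addMonoidHom 1) _ _).symm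
    have hσ' : expansion J (∑ i ∈ S \ J, zv i : RF k l) = HahnSeries.C (∑ i ∈ S \ J, zv i) := by
      rw [map_sum, map_sum]
      exact Finset.sum_congr rfl fun i hi => expansion_zv_of_notMem (Finset.mem_sdiff.1 hi).2
    have h4 : expansion J 4 = HahnSeries.C (4 : RF k l) := by rw [map_ofNat, map_ofNat]
    rw [← Finset.sum_inter_add_sum_sdiff S J, map_mul, map_add, hσJ, hσ', h4, mul_add,
      ← map_mul, HahnSeries.C_apply, HahnSeries.single_mul_single, zero_add]
  rw [deltaStarOn_apply, deltaStarOn_apply, deltaStarOn_apply, map_add, HahnSeries.coeff_add,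
    coeff_expansion_wittField hD, map_mul, hσ, add_mul, HahnSeries.coeff_add,
    HahnSeries.C_mul_eq_smul, HahnSeries.coeff_smul, smul_eq_mul]
  have hshift := HahnSeries.coeff_single_mul_add (r := (4 * ∑ i ∈ S ∩ J, zv i : RF k l))
    (x := expansion J x) (a := n - 1) (b := 1)
  rw [sub_add_cancel] at hshift
  rw [hshift]
  push_cast
  rw [show n - 2 + 1 = n - 1 by ring]
  ring

lemma wittField_one_coeff_expansion (J : Finset (Fin l)) (x : RF k l) (n : ℤ) :
    wittField D 1 J ((expansion J x).coeff n) = n * (expansion J x).coeff n := by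
  have h := congrArg (fun f => f.coeff n) (expansion_wittField_one hD J x)
  rw [coeff_expansion_wittField hD] at h
  simpa [wittField_apply (D := D) 1 ∅] using h

lemma expansion_eq_single_iff [CharZero k] {S : Finset (Fin l)} {d : ℤ} {x : RF k l} :
    expansion S x = HahnSeries.single d x ↔ wittField D 1 S x = d * x := by
  have : CharZero (RF k l) :=
    charZero_of_injective_algebraMap (algebraMap k (RF k l)).injective
  constructor
  · intro h
    simpa [h] using wittField_one_coeff_expansion hD S x d
  · intro h
    suffices hsingle : expansion S x = HahnSeries.single d ((expansion S x).coeff d) by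
      rwa [eq_of_expansion_eq_single hsingle] at hsingle
    ext n
    rw [HahnSeries.coeff_single]
    split_ifs with hn
    · rw [hn]
    · have heuler : (n : RF k l) * (expansion S x).coeff n = d * (expansion S x).coeff n := by
        have := congrArg (fun f => f.coeff n) (expansion_wittField_one hD S x)
        rw [h, map_mul, map_intCast, ← map_intCast HahnSeries.C, HahnSeries.C_mul_eq_smul] at this
        simpa using this.symm
      exact (mul_eq_mul_right_iff.1 heuler).resolve_left (by exact_mod_cast hn)

end Coefficients

variable (D) in
/-- The Euler eigenvalue equation of degree `-2 |S|` in the variables of `S`, as an operator. -/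
def eulerDefect (S : Finset (Fin l)) : RF k l →ₗ[k] RF k l :=
  (wittField D 1 S).toLinearMap - LinearMap.mulLeft k ((-2 * S.card : ℤ) : RF k l)

lemma eulerDefect_apply (S : Finset (Fin l)) (x : RF k l) :
    eulerDefect D S x = wittField D 1 S x - (-2 * S.card : ℤ) * x :=
  rfl

lemma eulerDefect_eq_zero_iff {S : Finset (Fin l)} {x : RF k l} :
    eulerDefect D S x = 0 ↔ wittField D 1 S x = (-2 * S.card : ℤ) * x :=
  sub_eq_zero

variable (D) in
/-- The space `R` of admissible functions of the variables of `S`. -/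
def admissibleSubmodule (S : Finset (Fin l)) : Submodule k (RF k l) :=
  Subalgebra.toSubmodule (phiAlgebra k l) ⊓
    Subalgebra.toSubmodule (varField k S).toSubalgebra ⊓
    LinearMap.ker (deltaStarOn D S) ⊓
    LinearMap.ker (eulerDefect D S) ⊓
    ⨅ (J : Finset (Fin l)) (_ : J ⊆ S) (m : ℤ)
      (_ : m < -2 * (J.card : ℤ) ∨ m = -2 * (J.card : ℤ) + 1), LinearMap.ker (expansionCoeff J m)

lemma mem_admissibleSubmodule_iff {S : Finset (Fin l)} {x : RF k l} :
    x ∈ admissibleSubmodule D S ↔ x ∈ phiAlgebra k l ∧ x ∈ varField k S ∧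
      deltaStarOn D S x = 0 ∧ wittField D 1 S x = (-2 * S.card : ℤ) * x ∧
      ∀ J ⊆ S, ∀ m : ℤ, (m < -2 * (J.card : ℤ) ∨ m = -2 * (J.card : ℤ) + 1) →
        (expansion J x).coeff m = 0 := by
  simp only [admissibleSubmodule, Submodule.mem_inf, Submodule.mem_iInf, LinearMap.mem_ker,
    and_assoc, eulerDefect_eq_zero_iff]
  rfl

variable (D) in
/-- The space `R₀` of indecomposable admissible functions of the variables of `S`. -/
def indecomposableSubmodule (S : Finset (Fin l)) : Submodule k (RF k l) :=
  admissibleSubmodule D S ⊓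
    ⨅ (J : Finset (Fin l)) (_ : J ⊆ S) (_ : J ≠ ∅) (_ : J ≠ S), LinearMap.ker (leadingComponent J)

lemma mem_indecomposableSubmodule_iff {S : Finset (Fin l)} {x : RF k l} :
    x ∈ indecomposableSubmodule D S ↔ x ∈ admissibleSubmodule D S ∧
      ∀ J ⊆ S, J ≠ ∅ → J ≠ S → leadingComponent J x = 0 := by
  simp only [indecomposableSubmodule, Submodule.mem_inf, Submodule.mem_iInf, LinearMap.mem_ker]

section Span

variable [CharZero k] (hD : IsPartialDeriv D)
include hD

lemma admissible_iff {S : Finset (Fin l)} {x : RF k l} :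
    Admissible D S x ↔ x ∈ admissibleSubmodule D S := by
  rw [Admissible, mem_admissibleSubmodule_iff, mem_Phi_iff, dependsOnlyOn_iff,
    ← deltaStarOn_eq_sum, isHomogeneousOn_iff, expansion_eq_single_iff hD, ← neg_mul]
  simp only [component_two_eq_coeff_expansion]
  refine and_congr_right' <| and_congr_right' <| and_congr_right' <| and_congr_right' <|
    forall₂_congr fun J _ => ⟨fun h m hm => ?_, fun h n hn => h _ (by omega)⟩
  simpa using h (m + 2 * J.card) (by omega)

lemma admissibleInd_iff {S : Finset (Fin l)} {x : RF k l} :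
    AdmissibleInd D S x ↔ x ∈ indecomposableSubmodule D S := by
  rw [AdmissibleInd, admissible_iff hD, mem_indecomposableSubmodule_iff]
  simp only [component_two_eq_coeff_expansion, leadingComponent_apply, zero_sub, neg_mul]

lemma span_admissible (S : Finset (Fin l)) :
    Submodule.span k {x | Admissible D S x} = admissibleSubmodule D S := by
  rw [show {x | Admissible D S x} = (admissibleSubmodule D S : Set (RF k l)) from
    Set.ext fun x => admissible_iff hD, Submodule.span_eq]

lemma span_admissibleInd (S : Finset (Fin l)) :
    Submodule.span k {x | AdmissibleInd D S x} = indecomposableSubmodule D S := by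
  rw [show {x | AdmissibleInd D S x} = (indecomposableSubmodule D S : Set (RF k l)) from
    Set.ext fun x => admissibleInd_iff hD, Submodule.span_eq]

end Span

section Translation

attribute [local instance] LieRing.ofAssociativeRing

variable (hD : IsPartialDeriv D)
include hD

lemma wittField_zero_vandermondeProd : wittField D 0 Finset.univ
    (algebraMap (MvPolynomial (Fin l) k) (RF k l) (vandermondeProd k l)) = 0 := by
  rw [algebraMap_vandermondeProd]
  refine Finset.prod_induction _ (fun y => wittField D 0 Finset.univ y = 0)
    (fun a b ha hb => by simp [ha, hb]) (Derivation.map_one_eq_zero _) fun i _ => ?_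
  refine Finset.prod_induction _ (fun y => wittField D 0 Finset.univ y = 0)
    (fun a b ha hb => by simp [ha, hb]) (Derivation.map_one_eq_zero _) fun j _ => ?_
  split_ifs <;> simp [wittField_zv hD]

lemma exists_wittField_zero_pow_eq_zero {S : Finset (Fin l)} {x : RF k l}
    (hx : x ∈ phiAlgebra k l) (hxS : x ∈ varField k S) :
    ∃ n, ((wittField D 0 S).toLinearMap ^ n) x = 0 := by
  obtain ⟨N, p, hp⟩ := exists_mul_vandermondeProd_pow_eq_algebraMap hx
  clear hx
  induction h : p.totalDegree using Nat.strong_induction_on generalizing p x with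
  | _ d ih =>
    have hstep : wittField D 0 S x * algebraMap (MvPolynomial (Fin l) k) (RF k l)
        (vandermondeProd k l) ^ N = algebraMap _ _ (polyTranslation k Finset.univ p) := by
      rw [← wittField_zero_algebraMap hD, ← hp, Derivation.leibniz, Derivation.leibniz_pow,
        wittField_zero_vandermondeProd hD, wittField_eq_of_subset hD S.subset_univ hxS]
      simp [mul_comm]
    by_cases h0 : polyTranslation k Finset.univ p = 0
    · refine ⟨1, ?_⟩
      rw [h0, map_zero] at hstep
      exact (mul_eq_zero.1 hstep).resolve_right (pow_ne_zero _
        ((map_ne_zero_iff _ (IsFractionRing.injective _ _)).2 vandermondeProd_ne_zero))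
    · obtain ⟨n, hn⟩ := ih _ (h ▸ totalDegree_polyTranslation_lt h0)
        (wittField_mem_varField hD subset_rfl hxS 0) _ hstep rfl
      exact ⟨n + 1, by rw [pow_succ]; exact hn⟩

lemma wittField_commutator (e f : ℕ) (S : Finset (Fin l)) (x : RF k l) :
    wittField D e S (wittField D f S x) - wittField D f S (wittField D e S x) =
      (f - e) * wittField D (e + f - 1) S x := by
  let d : Derivation k (RF k l) (RF k l) := ⁅wittField D e S, wittField D f S⁆ -
    (f - e : RF k l) • wittField D (e + f - 1) S
  suffices hd : d x = 0 from sub_eq_zero.1 hd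
  refine twistedDerivation_eq_zero_on_varField (φ := RingHom.id _)
    (d := d.toLinearMap.toAddMonoidHom) (by simp) (fun c => d.map_algebraMap c)
    (fun i _ => ?_) (mem_varField_univ x)
  change wittField D e S (wittField D f S (zv i)) - wittField D f S (wittField D e S (zv i)) -
    (f - e) * wittField D (e + f - 1) S (zv i) = 0
  rw [wittField_zv hD, wittField_zv hD, wittField_zv hD]
  split_ifs with hi
  · rw [Derivation.leibniz_pow, Derivation.leibniz_pow, wittField_zv hD, wittField_zv hD, if_pos hi,
      if_pos hi]
    obtain _ | e := e <;> obtain _ | f := f <;>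
      simp only [smul_eq_mul, nsmul_eq_mul, Nat.cast_add, Nat.cast_zero, Nat.cast_one,
        Nat.add_sub_cancel, Nat.zero_add, Nat.add_zero, ← Nat.add_assoc] <;> ring
  · simp

lemma wittField_sum_zv (e : ℕ) (S : Finset (Fin l)) :
    wittField D e S (∑ i ∈ S, zv i) = ∑ i ∈ S, zv i ^ e := by
  rw [map_sum]
  exact Finset.sum_congr rfl fun i hi => by rw [wittField_zv hD, if_pos hi]

lemma wittField_deltaStarOn (e : ℕ) (S : Finset (Fin l)) (x : RF k l) :
    wittField D e S (deltaStarOn D S x) = wittField D e S (wittField D 2 S x) +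
      4 * (∑ i ∈ S, zv i ^ e) * x + 4 * (∑ i ∈ S, zv i) * wittField D e S x := by
  have h4 : wittField D e S (4 : RF k l) = 0 := by
    simpa using (wittField D e S).map_natCast 4
  rw [deltaStarOn_apply, map_add, Derivation.leibniz, Derivation.leibniz, h4,
    wittField_sum_zv hD]
  simp only [smul_eq_mul]
  ring

/-- In the variables of `S`, the operators `Δ*(4,…,4)` and `-Δ` generate a copy of `sl₂`. -/
lemma isSl2Triple_deltaStarOn [CharZero k] {S : Finset (Fin l)} (hS : S.Nonempty) :
    IsSl2Triple (L := Module.End k (RF k l))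
      (2 • (wittField D 1 S).toLinearMap + (4 * S.card) • LinearMap.id)
      (deltaStarOn D S) (-(wittField D 0 S).toLinearMap) where
  h_ne_zero h := by
    have : CharZero (RF k l) :=
      charZero_of_injective_algebraMap (algebraMap k (RF k l)).injective
    have h1 := DFunLike.congr_fun h 1
    simp [hS.ne_empty] at h1
  lie_e_f := by
    ext x
    have hcomm := wittField_commutator hD 2 0 S x
    change deltaStarOn D S (-wittField D 0 S x) - -wittField D 0 S (deltaStarOn D S x) =
      2 • wittField D 1 S x + (4 * S.card) • x
    rw [map_neg, deltaStarOn_apply, wittField_deltaStarOn hD]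
    simp only [CharP.cast_eq_zero, Nat.cast_ofNat, zero_sub, add_zero, Nat.add_one_sub_one, neg_mul,
      neg_add_rev, pow_zero, Finset.sum_const, nsmul_eq_mul, mul_one, add_sub_add_left_eq_sub,
      Nat.cast_mul] at hcomm ⊢
    linear_combination -hcomm
  lie_h_e_nsmul := by
    ext x
    have hcomm := wittField_commutator hD 1 2 S x
    change (2 • wittField D 1 S (deltaStarOn D S x) + (4 * S.card) • deltaStarOn D S x) -
      deltaStarOn D S (2 • wittField D 1 S x + (4 * S.card) • x) = 2 • deltaStarOn D S x
    rw [map_add, map_nsmul, map_nsmul, wittField_deltaStarOn hD, deltaStarOn_apply,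
      deltaStarOn_apply]
    simp only [Nat.cast_ofNat, Nat.cast_one, Nat.reduceAdd, Nat.add_one_sub_one, pow_one, smul_add,
      nsmul_eq_mul, Nat.cast_mul, add_sub_add_right_eq_sub] at hcomm ⊢
    linear_combination 2 * hcomm
  lie_h_f_nsmul := by
    ext x
    have hcomm := wittField_commutator hD 1 0 S x
    change (2 • wittField D 1 S (-wittField D 0 S x) + (4 * S.card) • -wittField D 0 S x) -
      -wittField D 0 S (2 • wittField D 1 S x + (4 * S.card) • x) = -(2 • -wittField D 0 S x)
    rw [map_neg, map_add, map_nsmul, map_nsmul]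
    simp only [CharP.cast_eq_zero, Nat.cast_one, zero_sub, add_zero, tsub_self, neg_mul, one_mul,
      smul_neg, nsmul_eq_mul, Nat.cast_ofNat, Nat.cast_mul, neg_add_rev, neg_neg] at hcomm ⊢
    linear_combination -2 * hcomm

lemma wittField_zero_eq_zero_of_mem_admissibleSubmodule [CharZero k] {S : Finset (Fin l)}
    {x : RF k l} (hx : x ∈ admissibleSubmodule D S) : wittField D 0 S x = 0 := by
  obtain ⟨hphi, hxS, hstar, heuler, -⟩ := mem_admissibleSubmodule_iff.1 hx
  obtain rfl | hS := S.eq_empty_or_nonempty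
  · simp [wittField_apply]
  obtain rfl | hx0 := eq_or_ne x 0
  · exact map_zero _
  have hprim : (isSl2Triple_deltaStarOn hD hS).HasPrimitiveVectorWith x (0 : k) :=
    { ne_zero := hx0
      lie_h := by
        change 2 • wittField D 1 S x + (4 * S.card) • x = (0 : k) • x
        rw [heuler, zero_smul]
        push_cast [nsmul_eq_mul]
        ring
      lie_e := hstar }
  have hpow (n : ℕ) : (LieModule.toEnd k (Module.End k (RF k l)) (RF k l)
      (-(wittField D 0 S).toLinearMap) ^ n) x =
        (-1) ^ n * ((wittField D 0 S).toLinearMap ^ n) x := by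
    rw [LieModule.toEnd_module_end, LieHom.id_apply]
    obtain h | h := n.even_or_odd
    · rw [h.neg_one_pow, one_mul]
      exact DFunLike.congr_fun (h.neg_pow (_ : Module.End k (RF k l))) x
    · rw [h.neg_one_pow, neg_one_mul]
      exact DFunLike.congr_fun (h.neg_pow (_ : Module.End k (RF k l))) x
  have hdesc (n : ℕ) (hn : ((wittField D 0 S).toLinearMap ^ (n + 1)) x = 0) :
      wittField D 0 S x = 0 := by
    induction n with
    | zero => exact hn
    | succ n ih =>
      have hn' := hprim.lie_e_pow_succ_toEnd_f (n + 1)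
      rw [hpow, hn, mul_zero, lie_zero, eq_comm, smul_eq_zero] at hn'
      have hcoeff : (((n + 1 : ℕ) : k) + 1) * (0 - (n + 1 : ℕ)) ≠ 0 :=
        mul_ne_zero (Nat.cast_add_one_ne_zero _)
          (sub_ne_zero.2 (Nat.cast_ne_zero.2 n.succ_ne_zero).symm)
      have hn'' := hn'.resolve_left hcoeff
      rw [hpow] at hn''
      exact ih ((mul_eq_zero.1 hn'').resolve_left (pow_ne_zero _ (neg_ne_zero.2 one_ne_zero)))
  obtain ⟨n, hn⟩ := exists_wittField_zero_pow_eq_zero hD hphi hxS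
  exact hdesc n (by rw [pow_succ', Module.End.mul_apply, hn, map_zero])

end Translation

end Admissible

/-! ### Factorisation of leading components -/

section Factorisation

variable {k : Type} [Field k] {l : ℕ}
variable {D : Fin l → Derivation k (RF k l) (RF k l)} (hD : IsPartialDeriv D)

lemma exists_mul_pow_eq_algebraMap_of_mem_puncturedPhiAlgebra {x : RF k l}
    (hx : x ∈ puncturedPhiAlgebra k l) : ∃ (N : ℕ) (p : MvPolynomial (Fin l) k),
      x * algebraMap (MvPolynomial (Fin l) k) (RF k l)
        (vandermondeProd k l * ∏ i, MvPolynomial.X i) ^ N = algebraMap _ _ p := by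
  refine exists_mul_pow_eq_algebraMap_of_mem_adjoin (fun y hy => ?_) hx
  obtain hy | ⟨i, rfl⟩ := hy
  · exact exists_mul_eq_algebraMap_of_vandermondeProd_dvd (dvd_mul_right _ _) hy
  · exact exists_inv_mul_eq_algebraMap_of_dvd
      ((Finset.dvd_prod_of_mem _ (Finset.mem_univ i)).mul_left _)

lemma isRelPrime_prod_X_translatePoly : IsRelPrime (∏ i, MvPolynomial.X i)
    (translatePoly Finset.univ 1 (∏ i, MvPolynomial.X i : MvPolynomial (Fin l) k)) := by
  rw [map_prod]
  refine IsRelPrime.prod_left fun i _ => IsRelPrime.prod_right fun j _ => ?_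
  rw [(MvPolynomial.X_prime (i := i)).irreducible.isRelPrime_iff_not_dvd, translatePoly_X,
    if_pos (Finset.mem_univ j)]
  rintro ⟨q, hq⟩
  simpa using congrArg (MvPolynomial.eval 0) hq

include hD in
/-- Translation invariance moves a pole along `zᵢ = 0` to a pole along `zᵢ = -1`. -/
lemma mem_phiAlgebra_of_wittField_zero_eq_zero [CharZero k] {x : RF k l}
    (hx : x ∈ puncturedPhiAlgebra k l) (h : wittField D 0 Finset.univ x = 0) :
    x ∈ phiAlgebra k l := by
  obtain ⟨N, p, hp⟩ := exists_mul_pow_eq_algebraMap_of_mem_puncturedPhiAlgebra hx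
  set Z : MvPolynomial (Fin l) k := ∏ i, MvPolynomial.X i
  have hp' := congrArg (translate Finset.univ 1) hp
  rw [map_mul, map_pow, map_mul, map_mul, translate_eq_self hD h,
    translate_eq_self hD (wittField_zero_vandermondeProd hD), translate_algebraMap,
    translate_algebraMap] at hp'
  have hswap :
      p * translatePoly Finset.univ 1 Z ^ N = Z ^ N * translatePoly Finset.univ 1 p := by
    apply IsFractionRing.injective (MvPolynomial (Fin l) k) (RF k l)
    rw [map_mul, map_mul, ← hp, ← hp', map_mul, map_pow, map_pow]
    ring
  obtain ⟨q, rfl⟩ : Z ^ N ∣ p :=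
    (IsRelPrime.pow isRelPrime_prod_X_translatePoly).dvd_of_dvd_mul_right (Dvd.intro _ hswap.symm)
  have hZ0 : algebraMap (MvPolynomial (Fin l) k) (RF k l) Z ≠ 0 :=
    (map_ne_zero_iff _ (IsFractionRing.injective _ _)).2
      (Finset.prod_ne_zero_iff.2 fun i _ => MvPolynomial.X_ne_zero i)
  refine mem_Phi_iff.1 (mem_Phi_of_mul_vandermondeProd_pow_eq (N := N) (p := q)
    (mul_left_cancel₀ (pow_ne_zero N hZ0) ?_))
  rw [← map_pow, ← map_mul, ← hp, map_mul, mul_pow, map_pow]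
  ring

section Equations

variable {I J : Finset (Fin l)} {x : RF k l}
include hD

lemma wittField_zero_leadingComponent [CharZero k] (hIJ : Disjoint I J)
    (hx : x ∈ admissibleSubmodule D (I ∪ J)) :
    wittField D 0 I (leadingComponent J x) = 0 := by
  obtain ⟨-, -, -, -, hcoeff⟩ := mem_admissibleSubmodule_iff.1 hx
  have h := coeff_expansion_wittField hD 0 J (I ∪ J) x (-2 * J.card)
  rw [wittField_zero_eq_zero_of_mem_admissibleSubmodule hD hx, Nat.cast_zero, sub_zero,
    hcoeff J Finset.subset_union_right _ (Or.inr rfl), Finset.union_sdiff_cancel_right hIJ] at h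
  simpa [leadingComponent_apply] using h.symm

lemma deltaStarOn_leadingComponent_left (hIJ : Disjoint I J)
    (hx : x ∈ admissibleSubmodule D (I ∪ J)) : deltaStarOn D I (leadingComponent J x) = 0 := by
  obtain ⟨-, -, hstar, -, hcoeff⟩ := mem_admissibleSubmodule_iff.1 hx
  have h := coeff_expansion_deltaStarOn hD J (I ∪ J) x (-2 * J.card)
  rw [hstar, hcoeff J Finset.subset_union_right _ (Or.inl (sub_one_lt _)),
    Finset.union_sdiff_cancel_right hIJ] at h
  simpa [leadingComponent_apply] using h.symm

lemma deltaStarOn_leadingComponent_right (hx : x ∈ admissibleSubmodule D (I ∪ J)) :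
    deltaStarOn D J (leadingComponent J x) = 0 := by
  obtain ⟨-, -, hstar, -, hcoeff⟩ := mem_admissibleSubmodule_iff.1 hx
  have h := coeff_expansion_deltaStarOn hD J (I ∪ J) x (-2 * J.card + 1)
  rw [hstar, hcoeff J Finset.subset_union_right _ (Or.inr rfl), add_sub_cancel_right,
    Finset.union_inter_cancel_right] at h
  simpa [leadingComponent_apply] using h.symm

lemma wittField_one_leadingComponent (hIJ : Disjoint I J)
    (hx : x ∈ admissibleSubmodule D (I ∪ J)) :
    wittField D 1 I (leadingComponent J x) = (-2 * I.card : ℤ) * leadingComponent J x := by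
  obtain ⟨-, -, -, heuler, -⟩ := mem_admissibleSubmodule_iff.1 hx
  have h := coeff_expansion_wittField hD 1 J (I ∪ J) x (-2 * J.card)
  rw [heuler, Nat.cast_one, sub_add_cancel, Finset.union_inter_cancel_right,
    Finset.union_sdiff_cancel_right hIJ, wittField_one_coeff_expansion hD, map_mul, map_intCast,
    ← map_intCast HahnSeries.C, HahnSeries.C_mul_eq_smul, HahnSeries.coeff_smul, smul_eq_mul,
    Finset.card_union_of_disjoint hIJ, ← leadingComponent_apply] at h
  push_cast at h ⊢
  linear_combination -h

end Equations

include hD in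
lemma eulerDefect_mem_varField {S T : Finset (Fin l)} (hTS : T ⊆ S) {x : RF k l}
    (hx : x ∈ varField k S) : eulerDefect D T x ∈ varField k S := by
  rw [eulerDefect_apply]
  exact sub_mem (wittField_mem_varField hD hTS hx 1) (mul_mem (intCast_mem _ _) hx)

include hD in
lemma eulerDefect_mul_of_disjoint {S T : Finset (Fin l)} (h : Disjoint S T) {u : RF k l}
    (hu : u ∈ varField k T) (v : RF k l) : eulerDefect D S (u * v) = u * eulerDefect D S v := by
  rw [eulerDefect_apply, eulerDefect_apply, wittField_mul_of_disjoint hD h hu]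
  ring

include hD in
lemma leadingComponent_mem_mul_admissibleSubmodule [CharZero k] {I J : Finset (Fin l)}
    {x : RF k l} (hx : x ∈ admissibleSubmodule D (I ∪ J)) :
    leadingComponent J x ∈ Subalgebra.toSubmodule
      (puncturedPhiAlgebra k l ⊓ (varField k Jᶜ).toSubalgebra) * admissibleSubmodule D J := by
  obtain ⟨hphi, -, -, -, hcoeff⟩ := mem_admissibleSubmodule_iff.1 hx
  refine mem_mul_of_annihilated (varField_linearDisjoint hD disjoint_compl_left)
    (fun u (hu : u ∈ _ ⊓ (varField k Jᶜ).toSubalgebra) => hu.2)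
    (mem_splitAlgebra_iff.1 (coeff_expansion_mem_splitAlgebra hphi _)) ?_
  rintro v ⟨hvphi, hvJ⟩ hann
  refine mem_admissibleSubmodule_iff.2 ⟨hvphi, hvJ, ?_, ?_, fun K hK m hm => ?_⟩
  · exact hann (deltaStarOn D J) (deltaStarOn D J)
      (fun u hu v _ => deltaStarOn_mul_of_disjoint hD disjoint_compl_right hu.2 v)
      (fun v hv => deltaStarOn_mem_varField hD subset_rfl hv.2)
      (deltaStarOn_leadingComponent_right hD hx)
  · exact eulerDefect_eq_zero_iff.1 <| hann (eulerDefect D J) (eulerDefect D J)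
      (fun u hu v _ => eulerDefect_mul_of_disjoint hD disjoint_compl_right hu.2 v)
      (fun v hv => eulerDefect_mem_varField hD subset_rfl hv.2)
      (eulerDefect_eq_zero_iff.2 (wittField_one_coeff_expansion hD J x _))
  · refine hann (expansionCoeff K m) (expansionCoeff K m) (fun u hu v _ => ?_)
      (fun v hv => coeff_expansion_mem_varField hv.2 m) ?_
    · rw [expansionCoeff_apply, expansionCoeff_apply, map_mul,
        expansion_eq_C (disjoint_compl_right.mono_left hK) hu.2, HahnSeries.C_mul_eq_smul,
        HahnSeries.coeff_smul, smul_eq_mul]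
    · rw [expansionCoeff_apply, leadingComponent_apply,
        mem_commutingSubring_of_mem_phiAlgebra hK hphi,
        hcoeff K (hK.trans Finset.subset_union_right) m hm, map_zero, HahnSeries.coeff_zero]

include hD in
lemma coeff_expansion_union_mul [CharZero k] {J K : Finset (Fin l)} {u v : RF k l}
    (hu : u ∈ admissibleSubmodule D J) (hv : v ∈ varField k Jᶜ) (m : ℤ) :
    (expansion (K ∪ J) (u * v)).coeff (m + -2 * J.card) = u * (expansion K v).coeff m := by
  obtain ⟨-, huJ, -, heuler, -⟩ := mem_admissibleSubmodule_iff.1 hu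
  rw [map_mul, expansion_eq_of_inter_eq (J' := J) (by simp) huJ,
    (expansion_eq_single_iff hD).2 heuler, expansion_eq_of_inter_eq (J' := K) _ hv,
    HahnSeries.coeff_single_mul_add]
  ext i
  simp +contextual

include hD in
lemma leadingComponent_mem_mul [CharZero k] {I J : Finset (Fin l)} (hIJ : Disjoint I J)
    {x : RF k l} (hx : x ∈ admissibleSubmodule D (I ∪ J)) :
    leadingComponent J x ∈ admissibleSubmodule D I * admissibleSubmodule D J := by
  obtain ⟨hphi, hxS, -, -, hcoeff⟩ := mem_admissibleSubmodule_iff.1 hx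
  have hJ {u : RF k l} (hu : u ∈ admissibleSubmodule D J) : u ∈ varField k J :=
    (mem_admissibleSubmodule_iff.1 hu).2.1
  have hI : I ⊆ Jᶜ := Finset.subset_compl_iff_disjoint_right.2 hIJ
  have hmul := leadingComponent_mem_mul_admissibleSubmodule hD hx
  rw [mul_comm] at hmul ⊢
  refine mem_mul_of_annihilated (varField_linearDisjoint hD disjoint_compl_right)
    (fun u => hJ) hmul ?_
  rintro v ⟨hvphi, hvJ⟩ hann
  have hvI : v ∈ varField k I := by
    refine (mem_varField_iff hD).2 fun j hj => ?_
    by_cases hjJ : j ∈ J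
    · exact partialDeriv_eq_zero_of_notMem hD (by simpa using hjJ) hvJ
    · exact hann (D j).toLinearMap (D j).toLinearMap
        (fun u hu v _ => partialDeriv_mul_of_notMem hD hjJ (hJ hu) v)
        (fun v hv => partialDeriv_mem_varField hD j hv.2)
        (partialDeriv_eq_zero_of_notMem hD (by simp [hj, hjJ])
          (coeff_expansion_mem_varField hxS _))
  have htrans : wittField D 0 I v = 0 := hann (wittField D 0 I).toLinearMap
    (wittField D 0 I).toLinearMap (fun u hu v _ => wittField_mul_of_disjoint hD hIJ (hJ hu) 0 v)
    (fun v hv => wittField_mem_varField hD hI hv.2 0) (wittField_zero_leadingComponent hD hIJ hx)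
  rw [← wittField_eq_of_subset hD I.subset_univ hvI] at htrans
  refine mem_admissibleSubmodule_iff.2 ⟨mem_phiAlgebra_of_wittField_zero_eq_zero hD hvphi htrans,
    hvI, ?_, ?_, fun K hK m hm => ?_⟩
  · exact hann (deltaStarOn D I) (deltaStarOn D I)
      (fun u hu v _ => deltaStarOn_mul_of_disjoint hD hIJ (hJ hu) v)
      (fun v hv => deltaStarOn_mem_varField hD hI hv.2)
      (deltaStarOn_leadingComponent_left hD hIJ hx)
  · exact eulerDefect_eq_zero_iff.1 <| hann (eulerDefect D I) (eulerDefect D I)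
      (fun u hu v _ => eulerDefect_mul_of_disjoint hD hIJ (hJ hu) v)
      (fun v hv => eulerDefect_mem_varField hD hI hv.2)
      (eulerDefect_eq_zero_iff.2 (wittField_one_leadingComponent hD hIJ hx))
  · refine hann (expansionCoeff (K ∪ J) (m + -2 * J.card)) (expansionCoeff K m)
      (fun u hu v hv => coeff_expansion_union_mul hD hu hv.2 m)
      (fun v hv => coeff_expansion_mem_varField hv.2 m) ?_
    rw [expansionCoeff_apply, leadingComponent_apply,
      ← mem_commutingSubring_of_mem_phiAlgebra Finset.subset_union_right hphi,
      hcoeff _ (Finset.union_subset_union_left hK), map_zero, HahnSeries.coeff_zero]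
    rw [Finset.card_union_of_disjoint (hIJ.mono_left hK)]
    push_cast
    omega

end Factorisation

/-! ### Leading components as commuting idempotents -/

section TranslateCommute

variable {k : Type} [Field k] {l : ℕ} {I J : Finset (Fin l)}

/-- The multinomial series `(1 - p - q)⁻¹ = Σ_{n, m ≥ 0} (m + n choose m) pᵐ qⁿ` does not depend on
the order in which one expands in `p` and `q`. -/
lemma coeff_expansion_coeff_expansion_inv_one_sub_sub {p q : RF k l}
    (hpI : expansion I p = HahnSeries.C p) (hqI : expansion I q = HahnSeries.single 1 q)
    (hpJ : expansion J p = HahnSeries.single 1 p) (hqJ : expansion J q = HahnSeries.C q)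
    (n m : ℤ) : (expansion I ((expansion J (1 - p - q)⁻¹).coeff m)).coeff n =
      if m < 0 ∨ n < 0 then 0 else
        p ^ m.natAbs * (q ^ n.natAbs * (m.natAbs + n.natAbs).choose m.natAbs) := by
  have hq : 1 - q ≠ 0 := fun h => by
    rw [← sub_eq_zero.1 h, map_one] at hqI
    simpa using congrArg (HahnSeries.coeff · 0) hqI
  have hexp : expansion J (1 - q)⁻¹ = HahnSeries.C (1 - q)⁻¹ := by
    rw [map_inv₀, map_sub, map_one, hqJ, ← map_one HahnSeries.C, ← map_sub, ← map_inv₀]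
  have hr : expansion J (p * (1 - q)⁻¹) = HahnSeries.single 1 (p * (1 - q)⁻¹) := by
    rw [map_mul, hpJ, hexp, HahnSeries.C_apply, HahnSeries.single_mul_single, add_zero]
  have hfac : (1 - p - q)⁻¹ = (1 - q)⁻¹ * (1 - p * (1 - q)⁻¹)⁻¹ := by
    rw [← mul_inv]
    field_simp
    ring
  have hcoeff : (expansion J (1 - p - q)⁻¹).coeff m =
      if m < 0 then 0 else p ^ m.natAbs * (1 - q)⁻¹ ^ (m.natAbs + 1) := by
    rw [hfac, map_mul, hexp, HahnSeries.C_mul_eq_smul, HahnSeries.coeff_smul,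
      coeff_expansion_inv_one_sub hr, smul_ite, smul_zero, smul_eq_mul, mul_pow, pow_succ]
    split_ifs
    · rfl
    · ring
  rw [hcoeff]
  by_cases hm : m < 0
  · rw [if_pos hm, if_pos (Or.inl hm), map_zero, HahnSeries.coeff_zero]
  · rw [if_neg hm, map_mul, map_pow, map_pow, hpI, expansion_inv_one_sub hqI, ← map_pow, ← map_pow,
      ← map_pow, PowerSeries.mk_one_pow_eq_mk_choose_add, HahnSeries.C_mul_eq_smul,
      HahnSeries.coeff_smul, PowerSeries.coeff_coe, PowerSeries.coeff_rescale, PowerSeries.coeff_mk]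
    simp [hm]

lemma inv_one_sub_sub_mem_commutingSubring {p q : RF k l}
    (hpI : expansion I p = HahnSeries.C p) (hqI : expansion I q = HahnSeries.single 1 q)
    (hpJ : expansion J p = HahnSeries.single 1 p) (hqJ : expansion J q = HahnSeries.C q) :
    (1 - p - q)⁻¹ ∈ commutingSubring (expansion I) (expansion J) := by
  intro n m
  rw [coeff_expansion_coeff_expansion_inv_one_sub_sub hpI hqI hpJ hqJ, sub_right_comm,
    coeff_expansion_coeff_expansion_inv_one_sub_sub hqJ hpJ hqI hpI,
    add_comm n.natAbs, Nat.choose_symm_add]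
  exact if_congr or_comm rfl (by ring)

lemma mem_commutingSubring_comm {K : Type} [Field K] {E F : K →+* LaurentSeries K} {x : K} :
    x ∈ commutingSubring E F ↔ x ∈ commutingSubring F E :=
  ⟨fun h n m => (h m n).symm, fun h n m => (h m n).symm⟩

lemma translate_inv_sub_zv_mem_commutingSubring_of_mem (hIJ : Disjoint I J) {i j : Fin l}
    (hi : i ∈ J) (hj : j ∉ J) : translate J 1 (zv i - zv j : RF k l)⁻¹ ∈
      commutingSubring (expansion I) (expansion J) := by
  have hiI : i ∉ I := Finset.disjoint_right.1 hIJ hi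
  have htrans : translate J 1 (zv i - zv j : RF k l)⁻¹ = (1 - -zv i - zv j)⁻¹ := by
    rw [map_inv₀, map_sub, translate_zv, translate_zv, if_pos hi, if_neg hj, map_one, add_comm,
      sub_neg_eq_add]
  rw [htrans]
  by_cases hjI : j ∈ I
  · exact inv_one_sub_sub_mem_commutingSubring
      (by rw [map_neg, expansion_zv_of_notMem hiI, map_neg]) (expansion_zv_of_mem hjI)
      (by rw [map_neg, expansion_zv_of_mem hi, HahnSeries.single_neg]) (expansion_zv_of_notMem hj)
  · refine mem_commutingSubring_of_disjoint (disjoint_pair_of_notMem hiI hjI) (inv_mem ?_)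
    exact sub_mem (sub_mem (one_mem _) (neg_mem (zv_mem_varField (by simp))))
      (zv_mem_varField (by simp))

lemma translate_inv_sub_zv_mem_commutingSubring (hIJ : Disjoint I J) (i j : Fin l) :
    translate J 1 (zv i - zv j : RF k l)⁻¹ ∈ commutingSubring (expansion I) (expansion J) := by
  have hmem : (zv i - zv j : RF k l)⁻¹ ∈ varField k {i, j} :=
    inv_sub_zv_mem_varField (by simp) (by simp)
  by_cases hi : i ∈ J <;> by_cases hj : j ∈ J
  · rw [map_inv₀, map_sub, translate_zv, translate_zv, if_pos hi, if_pos hj,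
      add_sub_add_right_eq_sub]
    exact mem_commutingSubring_of_disjoint (disjoint_pair_of_notMem
      (Finset.disjoint_right.1 hIJ hi) (Finset.disjoint_right.1 hIJ hj)) hmem
  · exact translate_inv_sub_zv_mem_commutingSubring_of_mem hIJ hi hj
  · rw [← neg_sub, inv_neg, map_neg]
    exact neg_mem (translate_inv_sub_zv_mem_commutingSubring_of_mem hIJ hj hi)
  · rw [map_inv₀, map_sub, translate_zv, translate_zv, if_neg hi, if_neg hj,
      mem_commutingSubring_comm]
    exact mem_commutingSubring_of_disjoint (disjoint_pair_of_notMem hi hj) hmem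

/-- After the translation of the variables in `J`, all poles meeting both groups of variables are
away from the origin. -/
lemma translate_mem_commutingSubring (hIJ : Disjoint I J) {x : RF k l}
    (hx : x ∈ phiAlgebra k l) :
    translate J 1 x ∈ commutingSubring (expansion I) (expansion J) := by
  induction hx using Algebra.adjoin_induction with
  | mem x hx =>
    obtain ⟨i, rfl⟩ | ⟨i, j, rfl⟩ := hx
    · have hi : zv i ∈ commutingSubring (expansion (k := k) I) (expansion J) :=
        mem_commutingSubring_of_eq_single (expansion_zv I i) (expansion_zv J i)
      rw [translate_zv, map_one]
      split_ifs
      exacts [add_mem hi (one_mem _), hi]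
    · exact translate_inv_sub_zv_mem_commutingSubring hIJ i j
  | algebraMap c =>
    rw [AlgHom.commutes]
    exact mem_commutingSubring_of_disjoint (Finset.disjoint_empty_right I) (algebraMap_mem _ c)
  | add x y _ _ hx hy =>
    rw [map_add]
    exact add_mem hx hy
  | mul x y _ _ hx hy =>
    rw [map_mul]
    exact mul_mem hx hy

end TranslateCommute

section Product

variable {k : Type} [Field k] {l : ℕ}
variable {D : Fin l → Derivation k (RF k l) (RF k l)} {I J K S : Finset (Fin l)} {u v x : RF k l}

lemma expansion_mul_of_mem_varField (hu : u ∈ varField k I) (hv : v ∈ varField k K) :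
    expansion J (u * v) = expansion (J ∩ I) u * expansion (J ∩ K) v := by
  rw [map_mul, expansion_eq_of_inter_eq (J := J) (J' := J ∩ I) (by simp) hu,
    expansion_eq_of_inter_eq (J := J) (J' := J ∩ K) (by simp) hv]

lemma natCast_card_eq_add_of_disjoint (hIK : Disjoint I K) (hJ : J ⊆ I ∪ K) :
    (J.card : ℤ) = (J ∩ I).card + (J ∩ K).card := by
  rw [← Nat.cast_add, ← Finset.card_union_of_disjoint
    (hIK.mono Finset.inter_subset_right Finset.inter_subset_right),
    ← Finset.inter_union_distrib_left, Finset.inter_eq_left.2 hJ]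

lemma coeff_expansion_eq_zero_of_mem_admissibleSubmodule (hx : x ∈ admissibleSubmodule D S)
    (hJ : J ⊆ S) : ∀ n < -2 * (J.card : ℤ), (expansion J x).coeff n = 0 := fun n hn =>
  (mem_admissibleSubmodule_iff.1 hx).2.2.2.2 J hJ n (Or.inl hn)

lemma mul_mem_admissibleSubmodule (hD : IsPartialDeriv D) (hIK : Disjoint I K)
    (hu : u ∈ admissibleSubmodule D I) (hv : v ∈ admissibleSubmodule D K) :
    u * v ∈ admissibleSubmodule D (I ∪ K) := by
  obtain ⟨huphi, huI, hustar, hueuler, hucoeff⟩ := mem_admissibleSubmodule_iff.1 hu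
  obtain ⟨hvphi, hvK, hvstar, hveuler, hvcoeff⟩ := mem_admissibleSubmodule_iff.1 hv
  have hunion (e : ℕ) : wittField D e (I ∪ K) (u * v) =
      wittField D e I u * v + u * wittField D e K v := by
    rw [wittField_apply, Finset.sum_union hIK, ← wittField_apply, ← wittField_apply,
      wittField_mul_of_disjoint hD hIK.symm huI, mul_comm u v, wittField_mul_of_disjoint hD hIK hvK]
    ring
  refine mem_admissibleSubmodule_iff.2 ⟨mul_mem huphi hvphi,
    mul_mem (varField_mono Finset.subset_union_left huI)
      (varField_mono Finset.subset_union_right hvK), ?_, ?_, fun J hJ m hm => ?_⟩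
  · rw [deltaStarOn_apply] at hustar hvstar ⊢
    rw [hunion, Finset.sum_union hIK]
    linear_combination v * hustar + u * hvstar
  · rw [hunion, hueuler, hveuler, Finset.card_union_of_disjoint hIK]
    push_cast
    ring
  · have hcard := natCast_card_eq_add_of_disjoint hIK hJ
    have hu₀ := coeff_expansion_eq_zero_of_mem_admissibleSubmodule hu
      (Finset.inter_subset_right (s₁ := J))
    have hv₀ := coeff_expansion_eq_zero_of_mem_admissibleSubmodule hv
      (Finset.inter_subset_right (s₁ := J))
    rw [expansion_mul_of_mem_varField huI hvK]
    obtain hm | rfl := hm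
    · exact coeff_mul_eq_zero_of_lt_add hu₀ hv₀ (by linarith)
    · rw [hcard, mul_add]
      exact coeff_mul_add_add_one_eq_zero hu₀ hv₀
        (hucoeff _ Finset.inter_subset_right _ (Or.inr rfl))
        (hvcoeff _ Finset.inter_subset_right _ (Or.inr rfl))

lemma leadingComponent_mul (hIK : Disjoint I K) (hJ : J ⊆ I ∪ K)
    (hu : u ∈ admissibleSubmodule D I) (hv : v ∈ admissibleSubmodule D K) :
    leadingComponent J (u * v) = leadingComponent (J ∩ I) u * leadingComponent (J ∩ K) v := by
  rw [leadingComponent_apply, expansion_mul_of_mem_varField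
    (mem_admissibleSubmodule_iff.1 hu).2.1 (mem_admissibleSubmodule_iff.1 hv).2.1,
    natCast_card_eq_add_of_disjoint hIK hJ, mul_add]
  exact coeff_mul_add
    (coeff_expansion_eq_zero_of_mem_admissibleSubmodule hu Finset.inter_subset_right)
    (coeff_expansion_eq_zero_of_mem_admissibleSubmodule hv Finset.inter_subset_right)

end Product

section Commute

variable {k : Type} [Field k] {l : ℕ}
variable {D : Fin l → Derivation k (RF k l) (RF k l)} {I J K S : Finset (Fin l)} {x : RF k l}

lemma leadingComponent_empty (x : RF k l) : leadingComponent ∅ x = x := by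
  rw [leadingComponent_apply, expansion_eq_C (Finset.disjoint_empty_left _) (mem_varField_univ x)]
  simp

lemma leadingComponent_leadingComponent_comm_of_subset (hJK : J ⊆ K)
    (hx : x ∈ admissibleSubmodule D S) :
    leadingComponent J (leadingComponent K x) = leadingComponent K (leadingComponent J x) :=
  mem_commutingSubring_of_mem_phiAlgebra hJK (mem_admissibleSubmodule_iff.1 hx).1 _ _

variable [CharZero k] (hD : IsPartialDeriv D)
include hD

lemma leadingComponent_eq_self (hx : wittField D 1 S x = (-2 * S.card : ℤ) * x) :
    leadingComponent S x = x := by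
  rw [leadingComponent_apply, (expansion_eq_single_iff hD).2 hx, HahnSeries.coeff_single_same]

lemma leadingComponent_self (hx : x ∈ admissibleSubmodule D S) : leadingComponent S x = x :=
  leadingComponent_eq_self hD (mem_admissibleSubmodule_iff.1 hx).2.2.2.1

lemma leadingComponent_leadingComponent (J : Finset (Fin l)) (x : RF k l) :
    leadingComponent J (leadingComponent J x) = leadingComponent J x :=
  leadingComponent_eq_self hD (wittField_one_coeff_expansion hD J x _)

lemma leadingComponent_mem_mul_of_subset (hJ : J ⊆ S) (hx : x ∈ admissibleSubmodule D S) :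
    leadingComponent J x ∈ admissibleSubmodule D (S \ J) * admissibleSubmodule D J :=
  leadingComponent_mem_mul hD Finset.sdiff_disjoint (by rwa [Finset.sdiff_union_of_subset hJ])

lemma leadingComponent_mem_admissibleSubmodule (hJ : J ⊆ S) (hx : x ∈ admissibleSubmodule D S) :
    leadingComponent J x ∈ admissibleSubmodule D S := by
  refine Submodule.mul_le.2 (fun u hu v hv => ?_) (leadingComponent_mem_mul_of_subset hD hJ hx)
  rw [← Finset.sdiff_union_of_subset hJ]
  exact mul_mem_admissibleSubmodule hD Finset.sdiff_disjoint hu hv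

lemma leadingComponent_leadingComponent_eq_sdiff_inter (hJ : J ⊆ S) (hK : K ⊆ S)
    (hx : x ∈ admissibleSubmodule D S) : leadingComponent J (leadingComponent K x) =
      leadingComponent (J \ K) (leadingComponent (J ∩ K) (leadingComponent K x)) := by
  refine Submodule.mul_induction_on (leadingComponent_mem_mul_of_subset hD hK hx)
    (fun u hu v hv => ?_) fun a b ha hb => by simp only [map_add, ha, hb]
  have hsub {L : Finset (Fin l)} (hL : L ⊆ J) : L ⊆ S \ K ∪ K := by
    rw [Finset.sdiff_union_of_subset hK]
    exact hL.trans hJ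
  have hJK : J ∩ (S \ K) = J \ K := by
    rw [← Finset.inter_sdiff_assoc, Finset.inter_eq_left.2 hJ]
  rw [leadingComponent_mul Finset.sdiff_disjoint (hsub subset_rfl) hu hv,
    leadingComponent_mul Finset.sdiff_disjoint (hsub Finset.inter_subset_left) hu hv,
    Finset.inter_assoc, Finset.inter_assoc, Finset.inter_self, Finset.inter_sdiff_self,
    Finset.inter_empty, leadingComponent_empty,
    leadingComponent_mul Finset.sdiff_disjoint (hsub Finset.sdiff_subset) hu
      (leadingComponent_mem_admissibleSubmodule hD Finset.inter_subset_right hv), hJK,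
    Finset.sdiff_inter_self, leadingComponent_empty, ← hJK, Finset.inter_assoc, Finset.inter_self]

/-- Both sides are the leading component of the translate of `x` by `1` in the variables of `J`,
first in one group of variables and then in the other. -/
lemma leadingComponent_eq_of_disjoint (hIJ : Disjoint I J)
    (hx : x ∈ admissibleSubmodule D (I ∪ J)) : leadingComponent I x = leadingComponent J x := by
  have hx' : x ∈ admissibleSubmodule D (J ∪ I) := by rwa [Finset.union_comm]
  have htrans : translate I 1 (translate J 1 x) = x := by
    rw [translate_translate_of_disjoint hIJ]
    exact translate_eq_self hD (wittField_zero_eq_zero_of_mem_admissibleSubmodule hD hx) 1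
  have hI : (expansion I (translate J 1 x)).coeff (-2 * I.card) = leadingComponent I x := by
    rw [expansion_translate hIJ.symm, coeff_laurentMap]
    exact translate_eq_self hD (wittField_zero_leadingComponent hD hIJ.symm hx') 1
  have hJ : (expansion J (translate J 1 x)).coeff (-2 * J.card) = leadingComponent J x := by
    refine (translate I (1 : k)).toRingHom.injective ?_
    change translate I 1 _ = translate I 1 _
    rw [translate_eq_self hD (wittField_zero_leadingComponent hD hIJ hx), leadingComponent_apply]
    conv_rhs => rw [← htrans, expansion_translate hIJ, coeff_laurentMap]
    rfl
  have hcomm := mem_commutingSubring.1 (translate_mem_commutingSubring hIJ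
    (mem_admissibleSubmodule_iff.1 hx).1) (-2 * I.card) (-2 * J.card)
  rw [hI, hJ] at hcomm
  have hIT := leadingComponent_eq_self hD (wittField_one_leadingComponent hD hIJ hx)
  have hJT := leadingComponent_eq_self hD (wittField_one_leadingComponent hD hIJ.symm hx')
  rw [← hJT, ← hIT]
  exact hcomm.symm

lemma leadingComponent_sdiff (hJ : J ⊆ S) (hx : x ∈ admissibleSubmodule D S) :
    leadingComponent (S \ J) x = leadingComponent J x :=
  leadingComponent_eq_of_disjoint hD Finset.sdiff_disjoint
    (by rwa [Finset.sdiff_union_of_subset hJ])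

lemma leadingComponent_leadingComponent_comm_of_disjoint (hJ : J ⊆ S) (hK : K ⊆ S)
    (hJK : Disjoint J K) (hx : x ∈ admissibleSubmodule D S) :
    leadingComponent J (leadingComponent K x) = leadingComponent K (leadingComponent J x) := by
  rw [← leadingComponent_sdiff hD hK hx, leadingComponent_leadingComponent_comm_of_subset
    (Finset.subset_sdiff.2 ⟨hJ, hJK⟩) hx,
    leadingComponent_sdiff hD hK (leadingComponent_mem_admissibleSubmodule hD hJ hx)]

lemma leadingComponent_leadingComponent_eq (hJ : J ⊆ S) (hK : K ⊆ S)
    (hx : x ∈ admissibleSubmodule D S) : leadingComponent J (leadingComponent K x) =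
      leadingComponent (K \ J) (leadingComponent (J ∩ K) (leadingComponent (J \ K) x)) := by
  have hinter : J ∩ K ⊆ S := Finset.inter_subset_left.trans hJ
  have hsdiff : J \ K ⊆ S := Finset.sdiff_subset.trans hJ
  rw [leadingComponent_leadingComponent_eq_sdiff_inter hD hJ hK hx,
    leadingComponent_leadingComponent_comm_of_subset Finset.inter_subset_right hx,
    leadingComponent_leadingComponent_comm_of_disjoint hD hsdiff hK Finset.sdiff_disjoint
      (leadingComponent_mem_admissibleSubmodule hD hinter hx),
    ← leadingComponent_leadingComponent_comm_of_disjoint hD hinter hsdiff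
      (Finset.disjoint_sdiff_inter J K).symm hx,
    leadingComponent_leadingComponent_eq_sdiff_inter hD hK hinter
      (leadingComponent_mem_admissibleSubmodule hD hsdiff hx),
    Finset.inter_eq_right.2 Finset.inter_subset_right, Finset.inter_comm J K,
    Finset.sdiff_inter_self_left, leadingComponent_leadingComponent hD]

lemma leadingComponent_leadingComponent_comm (hJ : J ⊆ S) (hK : K ⊆ S)
    (hx : x ∈ admissibleSubmodule D S) :
    leadingComponent J (leadingComponent K x) = leadingComponent K (leadingComponent J x) := by
  have hinter : J ∩ K ⊆ S := Finset.inter_subset_left.trans hJ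
  have hJK : J \ K ⊆ S := Finset.sdiff_subset.trans hJ
  have hKJ : K \ J ⊆ S := Finset.sdiff_subset.trans hK
  rw [leadingComponent_leadingComponent_eq hD hJ hK hx,
    leadingComponent_leadingComponent_eq hD hK hJ hx, Finset.inter_comm K J,
    leadingComponent_leadingComponent_comm_of_disjoint hD hKJ hinter
      (by rw [Finset.inter_comm]; exact Finset.disjoint_sdiff_inter K J)
      (leadingComponent_mem_admissibleSubmodule hD hJK hx),
    leadingComponent_leadingComponent_comm_of_disjoint hD hKJ hJK disjoint_sdiff_sdiff hx,
    leadingComponent_leadingComponent_comm_of_disjoint hD hJK hinter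
      (Finset.disjoint_sdiff_inter J K) (leadingComponent_mem_admissibleSubmodule hD hKJ hx)]

end Commute

/-! ### Products of indecomposable functions -/

section Partitions

variable {α : Type} [DecidableEq α] {S I J : Finset α}

lemma disjoint_parts (hIJ : Disjoint I J) (P : Finpartition I) (Q : Finpartition J) :
    Disjoint P.parts Q.parts :=
  Finset.disjoint_left.2 fun _ hP hQ =>
    P.ne_bot hP (disjoint_self.1 (hIJ.mono (P.le hP) (Q.le hQ)))

lemma exists_finpartition_parts_eq_union (hIJ : Disjoint I J) (P : Finpartition I)
    (Q : Finpartition J) : ∃ R : Finpartition (I ∪ J), R.parts = P.parts ∪ Q.parts := by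
  refine ⟨⟨P.parts ∪ Q.parts, Finset.supIndep_iff_pairwiseDisjoint.2 ?_, ?_, ?_⟩, rfl⟩
  · rw [Finset.coe_union]
    exact P.disjoint.union Q.disjoint fun A hA B hB _ => hIJ.mono (P.le hA) (Q.le hB)
  · rw [Finset.sup_union, P.sup_parts, Q.sup_parts, Finset.sup_eq_union]
  · exact fun h => (Finset.mem_union.1 h).elim P.bot_notMem Q.bot_notMem

/-- `J` meets no member of `Q` properly; for a partition `Q` of a set containing `J` this says that
`J` is a union of blocks. -/
def IsUnionOfBlocks (Q : Finset (Finset α)) (J : Finset α) : Prop :=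
  ∀ B ∈ Q, Disjoint J B ∨ B ⊆ J

lemma isUnionOfBlocks_of_mem_parts (P : Finpartition S) {B : Finset α} (hB : B ∈ P.parts) :
    IsUnionOfBlocks P.parts B := by
  intro C hC
  by_cases hBC : B = C
  exacts [.inr hBC.ge, .inl (P.disjoint hB hC hBC)]

lemma parts_subset_of_isUnionOfBlocks_iff {P Q : Finpartition S}
    (h : ∀ J, IsUnionOfBlocks P.parts J ↔ IsUnionOfBlocks Q.parts J) : P.parts ⊆ Q.parts := by
  intro B hB
  obtain ⟨i, hi⟩ := P.nonempty_of_mem_parts hB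
  obtain ⟨C, hC, hiC⟩ := Q.exists_mem (P.subset hB hi)
  have hCB : C ⊆ B := ((h B).1 (isUnionOfBlocks_of_mem_parts P hB) C hC).resolve_left
    (Finset.not_disjoint_iff.2 ⟨i, hi, hiC⟩)
  have hBC : B ⊆ C := ((h C).2 (isUnionOfBlocks_of_mem_parts Q hC) B hB).resolve_left
    (Finset.not_disjoint_iff.2 ⟨i, hiC, hi⟩)
  exact hBC.antisymm hCB ▸ hC

lemma injective_isUnionOfBlocks :
    Function.Injective fun P : Finpartition S => IsUnionOfBlocks P.parts := by
  intro P Q h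
  have h' (J : Finset α) : IsUnionOfBlocks P.parts J ↔ IsUnionOfBlocks Q.parts J :=
    iff_of_eq (congrFun h J)
  exact Finpartition.ext ((parts_subset_of_isUnionOfBlocks_iff h').antisymm
    (parts_subset_of_isUnionOfBlocks_iff fun J => (h' J).symm))

end Partitions

section Separation

/-- An operator `T j` on which two of the vectors differ splits the relation into two shorter
ones. -/
lemma eq_zero_of_sum_eq_zero_of_separated {M ι κ : Type} [AddCommGroup M] (T : κ → M →+ M)
    {σ : ι → κ → Prop} (hσ : Function.Injective σ) {y : ι → M}
    (hy : ∀ i j, T j (y i) = if σ i j then y i else 0) (s : Finset ι)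
    (hsum : ∑ i ∈ s, y i = 0) : ∀ i ∈ s, y i = 0 := by
  induction s using Finset.strongInduction with
  | H s ih =>
  intro a ha
  by_cases hs : ∀ b ∈ s, b = a
  · rwa [Finset.sum_eq_single_of_mem a ha fun b hb hba => absurd (hs b hb) hba] at hsum
  push Not at hs
  obtain ⟨b, hb, hba⟩ := hs
  obtain ⟨j, hj⟩ : ∃ j, ¬(σ b j ↔ σ a j) := by
    by_contra! h
    exact hba (hσ (funext fun j => propext (h j)))
  refine ih (s.filter fun i => σ i j ↔ σ a j)
    (Finset.filter_ssubset.2 ⟨b, hb, hj⟩) ?_ a (by simp [ha])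
  have htrue : ∑ i ∈ s with σ i j, y i = 0 := by
    simp_rw [Finset.sum_filter, ← hy, ← map_sum, hsum, map_zero]
  by_cases haj : σ a j
  · simpa only [haj, iff_true] using htrue
  · rw [← Finset.sum_filter_add_sum_filter_not s (σ · j), htrue, zero_add] at hsum
    simpa only [haj, iff_false] using hsum

end Separation

section BlockProducts

variable {k : Type} [Field k] {l : ℕ} {D : Fin l → Derivation k (RF k l) (RF k l)}
variable {S : Finset (Fin l)}

variable (D) in
/-- The span of the products of indecomposable admissible functions, one for each block of `P`. -/
def blockProduct (P : Finpartition S) : Submodule k (RF k l) :=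
  ∏ B ∈ P.parts, indecomposableSubmodule D B

lemma indecomposableSubmodule_le (S : Finset (Fin l)) :
    indecomposableSubmodule D S ≤ admissibleSubmodule D S :=
  fun _ hx => (mem_indecomposableSubmodule_iff.1 hx).1

lemma one_mem_admissibleSubmodule_empty : (1 : RF k l) ∈ admissibleSubmodule D ∅ := by
  refine mem_admissibleSubmodule_iff.2 ⟨one_mem _, one_mem _, ?_, ?_, ?_⟩
  · simp [deltaStarOn_apply]
  · simp
  · intro J hJ m hm
    have hm0 : m ≠ 0 := by
      rw [Finset.subset_empty.1 hJ, Finset.card_empty] at hm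
      lia
    rw [map_one, HahnSeries.coeff_one, if_neg hm0]

lemma prod_admissibleSubmodule_le (hD : IsPartialDeriv D) {Q : Finset (Finset (Fin l))}
    (hQ : (Q : Set (Finset (Fin l))).PairwiseDisjoint id) :
    ∏ B ∈ Q, admissibleSubmodule D B ≤ admissibleSubmodule D (Q.sup id) := by
  induction Q using Finset.induction_on with
  | empty =>
    rw [Finset.prod_empty, Finset.sup_empty, Submodule.one_le]
    exact one_mem_admissibleSubmodule_empty
  | insert A Q hA ih =>
    rw [Finset.coe_insert, Set.pairwiseDisjoint_insert_of_notMem (by simpa using hA)] at hQ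
    rw [Finset.prod_insert hA, Finset.sup_insert, id, Finset.sup_eq_union]
    refine Submodule.mul_le.2 fun u hu v hv => mul_mem_admissibleSubmodule hD ?_ hu (ih hQ.1 hv)
    exact Finset.disjoint_sup_right.2 fun B hB => hQ.2 B hB

lemma blockProduct_le (hD : IsPartialDeriv D) (P : Finpartition S) :
    blockProduct D P ≤ admissibleSubmodule D S := by
  refine (Finset.prod_le_prod' fun B _ => indecomposableSubmodule_le B).trans ?_
  simpa only [P.sup_parts] using prod_admissibleSubmodule_le hD P.disjoint

lemma iSup_blockProduct_mul_le {I J : Finset (Fin l)} (hIJ : Disjoint I J) :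
    (⨆ P : Finpartition I, blockProduct D P) * (⨆ Q : Finpartition J, blockProduct D Q) ≤
      ⨆ R : Finpartition (I ∪ J), blockProduct D R := by
  simp only [Submodule.iSup_mul, Submodule.mul_iSup]
  refine iSup₂_le fun Q P => ?_
  obtain ⟨R, hR⟩ := exists_finpartition_parts_eq_union hIJ P Q
  refine le_trans (le_of_eq ?_) (le_iSup (blockProduct D) R)
  rw [blockProduct, blockProduct, blockProduct, hR, Finset.prod_union (disjoint_parts hIJ P Q)]

lemma indecomposableSubmodule_le_iSup_blockProduct (hS : S.Nonempty) :
    indecomposableSubmodule D S ≤ ⨆ P : Finpartition S, blockProduct D P := by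
  refine le_trans (le_of_eq ?_) (le_iSup (blockProduct D) (Finpartition.indiscrete hS.ne_empty))
  rw [blockProduct, Finpartition.indiscrete_parts, Finset.prod_singleton]

lemma leadingComponent_of_mem_indecomposableSubmodule [CharZero k] (hD : IsPartialDeriv D)
    {J : Finset (Fin l)} {x : RF k l} (hx : x ∈ indecomposableSubmodule D S) :
    leadingComponent (J ∩ S) x = if Disjoint J S ∨ S ⊆ J then x else 0 := by
  obtain ⟨hxR, hx0⟩ := mem_indecomposableSubmodule_iff.1 hx
  split_ifs with h
  · rcases h with h | h
    · rw [Finset.disjoint_iff_inter_eq_empty.1 h, leadingComponent_empty]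
    · rw [Finset.inter_eq_right.2 h, leadingComponent_self hD hxR]
  · push Not at h
    refine hx0 _ Finset.inter_subset_right ?_ (mt Finset.inter_eq_right.1 h.2)
    exact mt Finset.disjoint_iff_inter_eq_empty.2 h.1

lemma leadingComponent_of_mem_prod [CharZero k] (hD : IsPartialDeriv D)
    {Q : Finset (Finset (Fin l))} (hQ : (Q : Set (Finset (Fin l))).PairwiseDisjoint id)
    {J : Finset (Fin l)} (hJ : J ⊆ Q.sup id) {x : RF k l}
    (hx : x ∈ ∏ B ∈ Q, indecomposableSubmodule D B) :
    leadingComponent J x = if IsUnionOfBlocks Q J then x else 0 := by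
  induction Q using Finset.induction_on generalizing J x with
  | empty =>
    rw [Finset.subset_empty.1 hJ, leadingComponent_empty, if_pos (by simp [IsUnionOfBlocks])]
  | insert A Q hA ih =>
    rw [Finset.coe_insert, Set.pairwiseDisjoint_insert_of_notMem (by simpa using hA)] at hQ
    have hAQ : Disjoint A (Q.sup id) := Finset.disjoint_sup_right.2 fun B hB => hQ.2 B hB
    rw [Finset.sup_insert, id, Finset.sup_eq_union] at hJ
    have hunion : IsUnionOfBlocks (insert A Q) J ↔
        (Disjoint J A ∨ A ⊆ J) ∧ IsUnionOfBlocks Q (J ∩ Q.sup id) := by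
      rw [IsUnionOfBlocks, Finset.forall_mem_insert]
      refine and_congr_right' (forall₂_congr fun B hB => ?_)
      have hBQ : B ⊆ Q.sup id := Finset.le_sup (f := id) hB
      rw [Finset.disjoint_iff_inter_eq_empty, Finset.disjoint_iff_inter_eq_empty,
        Finset.inter_assoc, Finset.inter_eq_right.2 hBQ, Finset.subset_inter_iff,
        and_iff_left hBQ]
    rw [Finset.prod_insert hA] at hx
    induction hx using Submodule.mul_induction_on' with
    | mem_mul_mem u hu v hv =>
      have hvR : v ∈ admissibleSubmodule D (Q.sup id) := prod_admissibleSubmodule_le hD hQ.1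
        (Finset.prod_le_prod' (fun B _ => indecomposableSubmodule_le B) hv)
      rw [leadingComponent_mul hAQ hJ (indecomposableSubmodule_le A hu) hvR,
        leadingComponent_of_mem_indecomposableSubmodule hD hu,
        ih hQ.1 Finset.inter_subset_right hv, ite_zero_mul_ite_zero]
      exact if_congr hunion.symm rfl rfl
    | add x _ y _ hx hy =>
      rw [map_add, hx, hy]
      split_ifs <;> simp

lemma leadingComponent_of_mem_blockProduct [CharZero k] (hD : IsPartialDeriv D)
    {P : Finpartition S} {J : Finset (Fin l)} (hJ : J ⊆ S) {x : RF k l}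
    (hx : x ∈ blockProduct D P) :
    leadingComponent J x = if IsUnionOfBlocks P.parts J then x else 0 :=
  leadingComponent_of_mem_prod hD P.disjoint (by rwa [P.sup_parts]) hx

lemma eq_zero_of_sum_blockProduct_eq_zero [CharZero k] (hD : IsPartialDeriv D)
    {y : Finpartition (Finset.univ : Finset (Fin l)) → RF k l}
    (hy : ∀ P, y P ∈ blockProduct D P) (hsum : ∑ P, y P = 0)
    (P : Finpartition (Finset.univ : Finset (Fin l))) : y P = 0 := by
  have hT (P : Finpartition (Finset.univ : Finset (Fin l))) (J : Finset (Fin l)) :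
      leadingComponent J (y P) = if IsUnionOfBlocks P.parts J then y P else 0 :=
    leadingComponent_of_mem_blockProduct hD (Finset.subset_univ J) (hy P)
  exact eq_zero_of_sum_eq_zero_of_separated
    (fun J : Finset (Fin l) => (leadingComponent (k := k) J).toAddMonoidHom)
    injective_isUnionOfBlocks hT Finset.univ hsum P (Finset.mem_univ P)

end BlockProducts

section Decomposition

variable {k : Type} [Field k] [CharZero k] {l : ℕ} {D : Fin l → Derivation k (RF k l) (RF k l)}

/-- Replacing `y` by `y - T_K y` kills the leading component along `K`, and keeps those already
killed because the operators commute. -/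
lemma exists_sub_mem_of_leadingComponent_mem (hD : IsPartialDeriv D) {S : Finset (Fin l)}
    {W : Submodule k (RF k l)} (𝒥 : Finset (Finset (Fin l)))
    (hW : ∀ J ∈ 𝒥, J ⊆ S ∧ ∀ y ∈ admissibleSubmodule D S, leadingComponent J y ∈ W)
    {x : RF k l} (hx : x ∈ admissibleSubmodule D S) :
    ∃ y ∈ admissibleSubmodule D S, x - y ∈ W ∧ ∀ J ∈ 𝒥, leadingComponent J y = 0 := by
  induction 𝒥 using Finset.induction_on with
  | empty => exact ⟨x, hx, by simp, by simp⟩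
  | insert K 𝒥 _ ih =>
    obtain ⟨⟨hKS, hKW⟩, h𝒥⟩ := (Finset.forall_mem_insert _ _ _).1 hW
    obtain ⟨y, hy, hxy, hy0⟩ := ih h𝒥
    refine ⟨y - leadingComponent K y,
      sub_mem hy (leadingComponent_mem_admissibleSubmodule hD hKS hy), ?_,
      (Finset.forall_mem_insert _ _ _).2 ⟨?_, fun J hJ => ?_⟩⟩
    · rw [sub_sub_eq_add_sub, add_sub_right_comm]
      exact add_mem hxy (hKW y hy)
    · rw [map_sub, leadingComponent_leadingComponent hD, sub_self]
    · rw [map_sub, leadingComponent_leadingComponent_comm hD (h𝒥 J hJ).1 hKS hy, hy0 J hJ,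
        map_zero, sub_zero]

theorem admissibleSubmodule_le_iSup_blockProduct (hD : IsPartialDeriv D) {S : Finset (Fin l)}
    (hS : S.Nonempty) :
    admissibleSubmodule D S ≤ ⨆ P : Finpartition S, blockProduct D P := by
  induction S using Finset.strongInduction with
  | H S ih =>
  intro x hx
  have hdecomposable (K : Finset (Fin l)) (hK : K ∈ S.ssubsets.filter (·.Nonempty)) :
      K ⊆ S ∧ ∀ y ∈ admissibleSubmodule D S,
        leadingComponent K y ∈ ⨆ P : Finpartition S, blockProduct D P := by
    obtain ⟨hKS, hKne⟩ := Finset.mem_filter.1 hK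
    rw [Finset.mem_ssubsets] at hKS
    refine ⟨hKS.1, fun y hy => ?_⟩
    have hmem := iSup_blockProduct_mul_le Finset.sdiff_disjoint
      (mul_le_mul' (ih _ (Finset.sdiff_ssubset hKS.1 hKne) (Finset.sdiff_nonempty.2 hKS.2))
        (ih K hKS hKne) (leadingComponent_mem_mul_of_subset hD hKS.1 hy))
    rwa [Finset.sdiff_union_of_subset hKS.1] at hmem
  obtain ⟨y, hy, hxy, hy0⟩ := exists_sub_mem_of_leadingComponent_mem hD _ hdecomposable hx
  have hyR₀ : y ∈ indecomposableSubmodule D S :=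
    mem_indecomposableSubmodule_iff.2 ⟨hy, fun J hJ hJ₀ hJS => hy0 J (Finset.mem_filter.2
      ⟨Finset.mem_ssubsets.2 (hJ.ssubset_of_ne hJS), Finset.nonempty_iff_ne_empty.2 hJ₀⟩)⟩
  simpa using add_mem hxy (indecomposableSubmodule_le_iSup_blockProduct hS hyR₀)

end Decomposition

/-! ### The multiplication map -/

section TensorProducts

variable {k A : Type} [Field k] [CommRing A] [Algebra k A] {ι : Type} [Fintype ι]

/-- The multiplication map out of a tensor product of finitely many subspaces of an algebra, the
analogue of `Submodule.mulMap`. -/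
def piMulMap (N : ι → Submodule k A) : (⨂[k] i, N i) →ₗ[k] A :=
  PiTensorProduct.lift
    ((MultilinearMap.mkPiAlgebra k ι A).compLinearMap fun i => (N i).subtype)

lemma piMulMap_tprod (N : ι → Submodule k A) (u : ∀ i, N i) :
    piMulMap N (PiTensorProduct.tprod k u) = ∏ i, (u i : A) := by
  rw [piMulMap, PiTensorProduct.lift.tprod, MultilinearMap.compLinearMap_apply,
    MultilinearMap.mkPiAlgebra_apply]
  rfl

open scoped Pointwise in
lemma range_piMulMap (N : ι → Submodule k A) : LinearMap.range (piMulMap N) = ∏ i, N i := by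
  have hspan : ∏ i, N i = Submodule.span k (∏ i, (N i : Set A)) := by
    rw [← Submodule.prod_span]
    simp only [Submodule.span_eq]
  rw [LinearMap.range_eq_map, ← PiTensorProduct.span_tprod_eq_top, Submodule.map_span,
    ← Set.range_comp, hspan]
  congr 1
  ext x
  simp only [Set.mem_range, Function.comp_apply, piMulMap_tprod, Set.mem_fintype_prod]
  constructor
  · rintro ⟨u, rfl⟩
    exact ⟨fun i => u i, fun i => (u i).2, rfl⟩
  · rintro ⟨u, hu, rfl⟩
    exact ⟨fun i => ⟨u i, hu i⟩, rfl⟩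

lemma injective_piMulMap_of_linearIndependent {N : ι → Submodule k A} {κ : ι → Type}
    (b : ∀ i, Module.Basis (κ i) k (N i))
    (hb : LinearIndependent k fun f : ∀ i, κ i => ∏ i, (b i (f i) : A)) :
    Function.Injective (piMulMap N) := by
  have hcomp : piMulMap N ∘ Basis.piTensorProduct b = fun f => ∏ i, (b i (f i) : A) := by
    funext f
    rw [Function.comp_apply, Basis.piTensorProduct_apply, piMulMap_tprod]
  have hrepr (x) : Finsupp.linearCombination k (piMulMap N ∘ Basis.piTensorProduct b)
      ((Basis.piTensorProduct b).repr x) = piMulMap N x := by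
    rw [← Finsupp.apply_linearCombination, Module.Basis.linearCombination_repr]
  rw [← hcomp] at hb
  intro x y hxy
  exact (Basis.piTensorProduct b).repr.injective (hb (by rw [hrepr, hrepr, hxy]))

end TensorProducts

section DisjointBlocks

variable {k : Type} [Field k] [CharZero k] {l : ℕ} {D : Fin l → Derivation k (RF k l) (RF k l)}

lemma linearIndependent_mul_of_disjoint (hD : IsPartialDeriv D) {I J : Finset (Fin l)}
    (hIJ : Disjoint I J) {κ ι : Type} {a : κ → RF k l} {b : ι → RF k l}
    (ha : LinearIndependent k a) (hb : LinearIndependent k b) (haI : ∀ i, a i ∈ varField k I)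
    (hbJ : ∀ j, b j ∈ varField k J) :
    LinearIndependent k fun p : κ × ι => a p.1 * b p.2 :=
  (varField_linearDisjoint hD hIJ).linearIndependent_mul
    (a := fun i => ⟨a i, haI i⟩) (b := fun j => ⟨b j, hbJ j⟩)
    (.of_comp (varField k I).val.toLinearMap ha) (.of_comp (varField k J).val.toLinearMap hb)

lemma linearIndependent_prod_of_disjoint (hD : IsPartialDeriv D) {ι : Type} [Fintype ι]
    (B : ι → Finset (Fin l)) (hB : Pairwise (Function.onFun Disjoint B)) {κ : ι → Type}
    {b : ∀ i, κ i → RF k l} (hb : ∀ i, LinearIndependent k (b i))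
    (hbB : ∀ i e, b i e ∈ varField k (B i)) :
    LinearIndependent k fun f : ∀ i, κ i => ∏ i, b i (f i) := by
  revert B κ
  have induction_on_index := @Fintype.induction_empty_option fun ι _ => ∀ (B : ι → Finset (Fin l)),
    Pairwise (Function.onFun Disjoint B) → ∀ {κ : ι → Type} {b : ∀ i, κ i → RF k l},
      (∀ i, LinearIndependent k (b i)) → (∀ i e, b i e ∈ varField k (B i)) →
        LinearIndependent k fun f : ∀ i, κ i => ∏ i, b i (f i)
  refine induction_on_index ?_ ?_ ?_ ι
  · intro α β _ e ih B hB κ b hb hbB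
    let _ : Fintype α := .ofEquiv β e.symm
    have h := ih _ (hB.comp_of_injective e.injective) (fun i => hb (e i)) fun i => hbB (e i)
    rw [← linearIndependent_equiv (Equiv.piCongrLeft κ e)]
    convert h using 2 with f
    rw [Function.comp_apply, ← e.prod_comp]
    simp only [Equiv.piCongrLeft_apply_apply]
  · intro B _ κ b _ _
    simp
  · intro ι _ ih B hB κ b hb hbB
    have hdisj : Disjoint (B none) (Finset.univ.biUnion fun i : ι => B (some i)) :=
      (Finset.disjoint_biUnion_right _ _ _).2 fun i _ => hB (by simp)
    have h := linearIndependent_mul_of_disjoint hD hdisj (hb none)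
      (ih _ (hB.comp_of_injective (Option.some_injective ι)) (fun i => hb (some i))
        fun i => hbB (some i))
      (hbB none) fun f => prod_mem fun i _ =>
        varField_mono (Finset.subset_biUnion_of_mem (fun i => B (some i)) (Finset.mem_univ i))
          (hbB (some i) (f i))
    rw [← linearIndependent_equiv (Equiv.piOptionEquivProd (β := κ)).symm]
    convert h using 2 with f
    rw [Function.comp_apply, Fintype.prod_option]
    rfl

end DisjointBlocks

section ProductMap

variable {k : Type} [Field k] {l : ℕ} {D : Fin l → Derivation k (RF k l) (RF k l)}

variable (D) in
/-- The restriction of `productMap D` to the summand of the partition `P`. -/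
def blockProductMap (P : Finpartition (Finset.univ : Finset (Fin l))) :
    (⨂[k] B : ↥P.parts, ↥(Submodule.span k {α : RF k l | AdmissibleInd D ↑B α})) →ₗ[k] RF k l :=
  piMulMap fun B : ↥P.parts => Submodule.span k {α : RF k l | AdmissibleInd D ↑B α}

lemma productMap_of (P : Finpartition (Finset.univ : Finset (Fin l)))
    (x : ⨂[k] B : ↥P.parts, ↥(Submodule.span k {α : RF k l | AdmissibleInd D ↑B α})) :
    productMap D (DirectSum.of _ P x) = blockProductMap D P x := by
  rw [productMap, ← DirectSum.lof_eq_of k, DirectSum.toModule_lof]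
  rfl

lemma productMap_eq_sum (x : ⨁ P : Finpartition (Finset.univ : Finset (Fin l)),
      ⨂[k] B : ↥P.parts, ↥(Submodule.span k {α : RF k l | AdmissibleInd D ↑B α})) :
    productMap D x = ∑ P, blockProductMap D P (x P) := by
  conv_lhs => rw [← DirectSum.sum_univ_of x, map_sum]
  simp only [productMap_of]

lemma range_productMap_eq_iSup :
    LinearMap.range (productMap D) = ⨆ P, LinearMap.range (blockProductMap D P) := by
  refine le_antisymm ?_ (iSup_le fun P => ?_)
  · rintro _ ⟨x, rfl⟩
    rw [productMap_eq_sum]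
    exact sum_mem fun P _ => Submodule.mem_iSup_of_mem P (LinearMap.mem_range_self _ (x P))
  · rintro _ ⟨x, rfl⟩
    exact ⟨DirectSum.of _ P x, productMap_of P x⟩

lemma range_blockProductMap [CharZero k] (hD : IsPartialDeriv D)
    (P : Finpartition (Finset.univ : Finset (Fin l))) :
    LinearMap.range (blockProductMap D P) = blockProduct D P := by
  rw [blockProductMap, range_piMulMap]
  simp only [span_admissibleInd hD]
  exact Finset.prod_coe_sort P.parts (indecomposableSubmodule D)

lemma injective_blockProductMap [CharZero k] (hD : IsPartialDeriv D)
    (P : Finpartition (Finset.univ : Finset (Fin l))) :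
    Function.Injective (blockProductMap D P) := by
  let b (B : ↥P.parts) := Module.Free.chooseBasis k
    ↥(Submodule.span k {α : RF k l | AdmissibleInd D ↑B α})
  have hb (B : ↥P.parts) : LinearIndependent k fun e => (b B e : RF k l) :=
    (b B).linearIndependent.map' (Submodule.subtype _) (Submodule.ker_subtype _)
  have hbB (B : ↥P.parts) (e) : (b B e : RF k l) ∈ varField k (B : Finset (Fin l)) := by
    have hmem := (span_admissibleInd hD (B : Finset (Fin l))).le (b B e).2
    exact (mem_admissibleSubmodule_iff.1 (indecomposableSubmodule_le _ hmem)).2.1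
  have hdisj : Pairwise (Function.onFun Disjoint fun B : ↥P.parts => (B : Finset (Fin l))) :=
    fun A B hAB => P.disjoint A.2 B.2 (Subtype.coe_injective.ne hAB)
  have h := linearIndependent_prod_of_disjoint hD _ hdisj hb hbB
  exact injective_piMulMap_of_linearIndependent b h

theorem injective_productMap [CharZero k] (hD : IsPartialDeriv D) :
    Function.Injective (productMap D) := by
  intro x y hxy
  have hmem (P) : blockProductMap D P (x P) - blockProductMap D P (y P) ∈ blockProduct D P := by
    rw [← range_blockProductMap hD, ← map_sub]
    exact LinearMap.mem_range_self _ _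
  rw [← sub_eq_zero, productMap_eq_sum, productMap_eq_sum, ← Finset.sum_sub_distrib] at hxy
  refine DFinsupp.ext fun P => injective_blockProductMap hD P (sub_eq_zero.1 ?_)
  exact eq_zero_of_sum_blockProduct_eq_zero hD hmem hxy P

theorem range_productMap [CharZero k] (hD : IsPartialDeriv D) (hl : 1 ≤ l) :
    LinearMap.range (productMap D) = admissibleSubmodule D Finset.univ := by
  rw [range_productMap_eq_iSup]
  simp only [range_blockProductMap hD]
  exact le_antisymm (iSup_le fun P => blockProduct_le hD P)
    (admissibleSubmodule_le_iSup_blockProduct hD ⟨⟨0, hl⟩, Finset.mem_univ _⟩)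

end ProductMap

/-- every admissible function can be written uniquely as a linear
combination of products of indecomposable admissible functions: the multiplication
map from `⊕_P ⊗_{B ∈ P} R₀^{|B|}` is injective with range exactly `R^l`. -/
theorem statement10 {k : Type} [Field k] [CharZero k] {l : ℕ} (hl : 1 ≤ l)
    (D : Fin l → Derivation k (RF k l) (RF k l)) (hD : IsPartialDeriv D) :
    Function.Injective (productMap D) ∧
    LinearMap.range (productMap D)
      = Submodule.span k {α : RF k l | Admissible D Finset.univ α} := by
  exact ⟨injective_productMap hD, by rw [range_productMap hD hl, span_admissible hD]⟩

end Griess
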